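/- arXiv:2406.04704 — 4 statements merged into one kernel-verified Lean document; each statement's English description precedes it below -/
import Mathlib

section
/- Let M be a maximal subgroup of a finite group G and k a natural number. Then M is k-submodular in G if and only if either M is normal in G, or G/Core_G(M) is a non-nilpotent biprimary group with a cyclic Sylow q-subgroup M/Core_G(M) of order q^n and a normal Sylow p-subgroup P/Core_G(M) of order p, for some primes p, q and some natural number n ≤ k. -/
open Pointwise

/-- A subgroup `H` of `K` is `n`-modularly embedded in `K` if either `H ◁ K`, or
`K/Core_K(H)` is a non-nilpotent group of order `p * q ^ n` with `|K : H| = p`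
for some primes `p`, `q`. -/
def ModularlyEmbedded {G : Type*} [Group G] (n : ℕ) (H K : Subgroup G) : Prop :=
  H ≤ K ∧ ((H.subgroupOf K).Normal ∨
    ∃ p q : ℕ, p.Prime ∧ q.Prime ∧
      ¬ Group.IsNilpotent (↥K ⧸ (H.subgroupOf K).normalCore) ∧
      Nat.card (↥K ⧸ (H.subgroupOf K).normalCore) = p * q ^ n ∧
      (H.subgroupOf K).index = p)

/-- `H` is `k`-submodular in `K` if there is a chain `H = H_0 ≤ H_1 ≤ ⋯ ≤ H_m = K`
such that `H_{i-1}` is `n_i`-modularly embedded in `H_i` for some natural number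
`n_i ≤ k`, for every `i`. -/
def KSubmodularIn {G : Type*} [Group G] (k : ℕ) (H K : Subgroup G) : Prop :=
  ∃ (m : ℕ) (c : ℕ → Subgroup G), c 0 = H ∧ c m = K ∧
    ∀ i < m, ∃ n : ℕ, 0 < n ∧ n ≤ k ∧ ModularlyEmbedded n (c i) (c (i + 1))

/-!
Maximality of `M` reduces a chain from `M` to `G` to one proper step, and passing to
`G ⧸ M.normalCore` makes `M` a core-free Sylow `q`-subgroup `S` of prime index `p`.
If `D` is a maximal intersection of two distinct Sylow `q`-subgroups, both of them grow into the
normalizer of `D`, which is therefore no `q`-group and contains a subgroup `K` of order `p`. As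
`G = SK` (taking `S` to be one of the two) and `K` normalizes `D`, all conjugates of `D` lie in `S`,
so `D` is trivial. The Sylow `q`-subgroups thus meet trivially in pairs. Either `S` is normal, hence
trivial, or there are `p` of them and their nontrivial elements leave exactly `p` elements
uncovered; these form the unique subgroup `P` of order `p`. Finally `S ⊓ centralizer P` is
normalized by `P`, hence again trivial, so `S` embeds into the cyclic group `Aut P`.
-/

section NormalCore

variable {G : Type*} [Group G] {H K D : Subgroup G}

theorem le_normalCore_of_mul_eq_univ (hDH : D ≤ H) (hHK : (H : Set G) * (K : Set G) = Set.univ)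
    (hK : K ≤ Subgroup.normalizer (D : Set G)) : D ≤ H.normalCore := by
  intro d hd g
  obtain ⟨h, hh, x, hx, rfl⟩ := Set.mem_mul.1 (hHK ▸ Set.mem_univ g)
  have hxd : x * d * x⁻¹ ∈ H := hDH ((Subgroup.mem_normalizer_iff.1 (hK hx) d).1 hd)
  simpa [mul_assoc] using H.mul_mem (H.mul_mem hh hxd) (H.inv_mem hh)

theorem normalCore_map_mk'_normalCore (H : Subgroup G) :
    (H.map (QuotientGroup.mk' H.normalCore)).normalCore = ⊥ := by
  set π := QuotientGroup.mk' H.normalCore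
  have hker : π.ker = H.normalCore := QuotientGroup.ker_mk' _
  have hcomap : (H.map π).normalCore.comap π ≤ H.normalCore := by
    refine Subgroup.normal_le_normalCore.2 ?_
    refine (Subgroup.comap_mono (Subgroup.normalCore_le _)).trans ?_
    exact (Subgroup.comap_map_eq_self (hker.trans_le H.normalCore_le)).le
  rw [← Subgroup.map_comap_eq_self_of_surjective (QuotientGroup.mk'_surjective _)
    (H.map π).normalCore, Subgroup.map_eq_bot_iff]
  exact hcomap.trans hker.ge

theorem index_map_mk'_normalCore (H : Subgroup G) :
    (H.map (QuotientGroup.mk' H.normalCore)).index = H.index :=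
  Subgroup.index_map_eq _ (QuotientGroup.mk'_surjective _)
    ((QuotientGroup.ker_mk' _).trans_le H.normalCore_le)

theorem map_topEquiv_normalCore_subgroupOf (H : Subgroup G) :
    (H.subgroupOf ⊤).normalCore.map (Subgroup.topEquiv : (⊤ : Subgroup G) ≃* G).toMonoidHom =
      H.normalCore := by
  ext x
  constructor
  · rintro ⟨y, hy, rfl⟩ g
    exact hy ⟨g, trivial⟩
  · exact fun hx => ⟨⟨x, trivial⟩, fun g => hx g, rfl⟩

theorem inf_centralizer_eq_bot_of_mul_eq_univ (hHK : (H : Set G) * (K : Set G) = Set.univ)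
    (hcore : H.normalCore = ⊥) : H ⊓ Subgroup.centralizer (K : Set G) = ⊥ := by
  rw [eq_bot_iff, ← hcore]
  refine le_normalCore_of_mul_eq_univ inf_le_left hHK ?_
  refine le_trans ?_ (Subgroup.centralizer_le_normalizer _)
  exact Subgroup.le_centralizer_iff.1 inf_le_right

theorem isCyclic_of_mul_eq_univ_of_prime_card [K.Normal] (hK : (Nat.card K).Prime)
    (hHK : (H : Set G) * (K : Set G) = Set.univ) (hcore : H.normalCore = ⊥) :
    IsCyclic H := by
  have : Fact (Nat.card K).Prime := ⟨hK⟩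
  have : IsCyclic K := isCyclic_of_prime_card rfl
  let conj : H →* MulAut K := (MulAut.conjNormal (H := K)).comp H.subtype
  have hconj : Function.Injective conj := by
    refine (injective_iff_map_eq_one conj).2 fun h hh => ?_
    have hcentral : (h : G) ∈ Subgroup.centralizer (K : Set G) := by
      refine Subgroup.mem_centralizer_iff.2 fun x hx => ?_
      have hfix : (h : G) * x * (h : G)⁻¹ = x :=
        congrArg Subtype.val (DFunLike.congr_fun hh (⟨x, hx⟩ : K))
      exact (mul_inv_eq_iff_eq_mul.1 hfix).symm
    have hbot := inf_centralizer_eq_bot_of_mul_eq_univ hHK hcore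
    exact Subtype.ext (Subgroup.mem_bot.1 (hbot ▸ ⟨h.2, hcentral⟩))
  exact isCyclic_of_injective ((IsCyclic.mulAutMulEquiv K).toMonoidHom.comp conj)
    ((IsCyclic.mulAutMulEquiv K).injective.comp hconj)

end NormalCore

theorem lt_normalizer_inf_of_isNilpotent {G : Type*} [Group G] {D R : Subgroup G}
    [Group.IsNilpotent R] (hDR : D < R) : D < Subgroup.normalizer (D : Set G) ⊓ R := by
  have hlt : D.subgroupOf R < ⊤ :=
    lt_top_iff_ne_top.2 fun h => hDR.not_ge (Subgroup.subgroupOf_eq_top.1 h)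
  have hgrow := Group.normalizerCondition_of_isNilpotent _ hlt
  rw [← Subgroup.subgroupOf_normalizer_eq hDR.le] at hgrow
  obtain ⟨x, hxN, hxD⟩ := SetLike.exists_of_lt hgrow
  refine lt_of_le_not_ge (le_inf Subgroup.le_normalizer hDR.le) fun h => hxD ?_
  exact h ⟨hxN, x.2⟩

theorem ncard_iUnion_diff_one {G ι : Type*} [Group G] [Finite G] [Finite ι]
    {f : ι → Subgroup G} {m : ℕ} (hf : Pairwise fun i j => Disjoint (f i) (f j))
    (hm : ∀ i, Nat.card (f i) = m) :
    (⋃ i, (f i : Set G) \ {1}).ncard = Nat.card ι * (m - 1) := by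
  have := Fintype.ofFinite ι
  have hdisj : Pairwise fun i j => Disjoint ((f i : Set G) \ {1}) ((f j : Set G) \ {1}) :=
    fun i j hij => Set.disjoint_left.2 fun _ hi hj =>
      hi.2 (Subgroup.disjoint_def.1 (hf hij) hi.1 hj.1)
  have hcard : ∀ i, Nat.card ((f i : Set G) \ {1} : Set G) = m - 1 := fun i => by
    rw [Nat.card_coe_set_eq, Set.ncard_sdiff_singleton_of_mem (f i).one_mem,
      ← Nat.card_coe_set_eq]
    exact congrArg (· - 1) (hm i)
  rw [← Nat.card_coe_set_eq, Nat.card_congr (Set.unionEqSigmaOfDisjoint hdisj), Nat.card_sigma]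
  simp only [hcard, Finset.sum_const, Finset.card_univ, smul_eq_mul, Nat.card_eq_fintype_card]

theorem normalCore_sylow_eq_bot {G : Type*} [Group G] {q : ℕ} {S : Sylow q G}
    (hS : (S : Subgroup G).normalCore = ⊥) (T : Sylow q G) :
    (T : Subgroup G).normalCore = ⊥ := by
  rw [eq_bot_iff, ← hS, Subgroup.normal_le_normalCore]
  exact (T.2.to_le (Subgroup.normalCore_le _)).le_sylow_of_normal S

section Sylow

variable {G : Type*} [Group G] [Finite G] {q : ℕ} [Fact q.Prime]

theorem not_isPGroup_normalizer_inf_of_forall_not_lt {P R : Sylow q G} (hPR : P ≠ R)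
    (hmax : ∀ A B : Sylow q G, A ≠ B → ¬ (P ⊓ R : Subgroup G) < (A ⊓ B : Subgroup G)) :
    ¬ IsPGroup q (Subgroup.normalizer (((P : Subgroup G) ⊓ R : Subgroup G) : Set G)) := by
  intro hN
  obtain ⟨T, hNT⟩ := hN.exists_le_sylow
  have eq_of_lt : ∀ S : Sylow q G, (P ⊓ R : Subgroup G) < S → T = S := by
    intro S hS
    have : Group.IsNilpotent S := S.isPGroup'.isNilpotent
    by_contra hTS
    exact hmax T S hTS
      ((lt_normalizer_inf_of_isNilpotent hS).trans_le (inf_le_inf_right _ hNT))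
  have hP : (P ⊓ R : Subgroup G) < P := inf_lt_left.2 fun h => hPR (Sylow.ext (P.3 R.2 h).symm)
  have hR : (P ⊓ R : Subgroup G) < R := inf_lt_right.2 fun h => hPR (Sylow.ext (R.3 P.2 h))
  exact hPR ((eq_of_lt P hP).symm.trans (eq_of_lt R hR))

theorem isComplement'_of_card_eq_index_sylow {S : Sylow q G} {K : Subgroup G}
    (hK : Nat.card K = (S : Subgroup G).index) : Subgroup.IsComplement' (S : Subgroup G) K := by
  refine Subgroup.isComplement'_of_coprime ?_ ?_
  · rw [hK, Subgroup.card_mul_index]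
  · rw [hK]
    exact S.card_coprime_index

theorem exists_le_card_eq_index_sylow_of_not_isPGroup {S : Sylow q G}
    (hS : (S : Subgroup G).index.Prime) {N : Subgroup G} (hN : ¬ IsPGroup q N) :
    ∃ K ≤ N, Nat.card K = (S : Subgroup G).index := by
  have : Fact (S : Subgroup G).index.Prime := ⟨hS⟩
  have hdvd : (S : Subgroup G).index ∣ Nat.card N := by
    by_contra hndvd
    have hNS : Nat.card N ∣ Nat.card S :=
      ((hS.coprime_iff_not_dvd.2 hndvd).symm).dvd_of_dvd_mul_right
        ((S : Subgroup G).card_mul_index ▸ N.card_subgroup_dvd_card)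
    obtain ⟨m, hm⟩ := IsPGroup.iff_card.1 S.isPGroup'
    obtain ⟨l, -, hl⟩ := (Nat.dvd_prime_pow Fact.out).1 (hm ▸ hNS)
    exact hN (IsPGroup.of_card hl)
  obtain ⟨x, hx⟩ := exists_prime_orderOf_dvd_card' _ hdvd
  refine ⟨Subgroup.zpowers (x : G), Subgroup.zpowers_le.2 x.2, ?_⟩
  rw [Nat.card_zpowers, Subgroup.orderOf_coe, hx]

theorem pairwise_disjoint_sylow_of_normalCore_eq_bot {S : Sylow q G}
    (hindex : (S : Subgroup G).index.Prime) (hcore : (S : Subgroup G).normalCore = ⊥) :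
    Pairwise fun P R : Sylow q G => Disjoint (P : Subgroup G) R := by
  intro P₀ R₀ hne₀
  obtain ⟨⟨P, R⟩, hPR, hmax⟩ := Set.exists_max_image {x : Sylow q G × Sylow q G | x.1 ≠ x.2}
    (fun x => Nat.card (x.1 ⊓ x.2 : Subgroup G)) (Set.toFinite _) ⟨(P₀, R₀), hne₀⟩
  have hnormalizer := not_isPGroup_normalizer_inf_of_forall_not_lt hPR fun A B hAB hlt =>
    hlt.ne (Subgroup.eq_of_le_of_card_ge hlt.le (hmax (A, B) hAB))
  obtain ⟨K, hKN, hK⟩ := exists_le_card_eq_index_sylow_of_not_isPGroup hindex hnormalizer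
  have hKP : Nat.card K = (P : Subgroup G).index := by
    rw [hK, ← Nat.mul_right_inj (Nat.card_pos (α := S)).ne', Subgroup.card_mul_index,
      Nat.card_congr (S.equiv P).toEquiv, Subgroup.card_mul_index]
  have hbot : (P ⊓ R : Subgroup G) = ⊥ := by
    rw [eq_bot_iff, ← normalCore_sylow_eq_bot hcore P]
    exact le_normalCore_of_mul_eq_univ inf_le_left
      (isComplement'_of_card_eq_index_sylow hKP).mul_eq hKN
  have hcard₀ := hmax (P₀, R₀) hne₀
  simp only [hbot, Subgroup.card_bot] at hcard₀
  exact disjoint_iff.2 (Subgroup.eq_bot_of_card_le _ hcard₀)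

theorem ncard_compl_iUnion_sylow_diff_one {S : Sylow q G}
    (hdisj : Pairwise fun A B : Sylow q G => Disjoint (A : Subgroup G) B)
    (hcard : Nat.card (Sylow q G) = (S : Subgroup G).index) :
    (⋃ T : Sylow q G, ((T : Subgroup G) : Set G) \ {1})ᶜ.ncard = (S : Subgroup G).index := by
  have hunion := ncard_iUnion_diff_one hdisj fun T => Nat.card_congr (T.equiv S).toEquiv
  rw [Set.ncard_compl, hunion, hcard, Nat.mul_sub_one, mul_comm, Subgroup.card_mul_index]
  exact Nat.sub_sub_self (Nat.le_of_dvd Nat.card_pos (Subgroup.index_dvd_card _))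

theorem coe_eq_compl_iUnion_sylow_diff_one {S : Sylow q G} {P : Subgroup G}
    (hdisj : Pairwise fun A B : Sylow q G => Disjoint (A : Subgroup G) B)
    (hcard : Nat.card (Sylow q G) = (S : Subgroup G).index)
    (hP : Nat.card P = (S : Subgroup G).index) :
    (P : Set G) = (⋃ T : Sylow q G, ((T : Subgroup G) : Set G) \ {1})ᶜ := by
  refine Set.eq_of_subset_of_ncard_le (fun x hxP hxU => ?_) ?_
  · obtain ⟨T, hxT, hx1⟩ := Set.mem_iUnion.1 hxU
    have hTP : Nat.Coprime (Nat.card T) (Nat.card P) := by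
      rw [hP, Nat.card_congr (T.equiv S).toEquiv]
      exact S.card_coprime_index
    exact hx1 (Subgroup.disjoint_def.1 (Subgroup.disjoint_of_coprime_natCard hTP) hxT hxP)
  · rw [ncard_compl_iUnion_sylow_diff_one hdisj hcard, ← hP]
    exact (Nat.card_coe_set_eq _).le

theorem normal_of_card_eq_index_sylow {S : Sylow q G} {P : Subgroup G}
    (hdisj : Pairwise fun A B : Sylow q G => Disjoint (A : Subgroup G) B)
    (hcard : Nat.card (Sylow q G) = (S : Subgroup G).index)
    (hP : Nat.card P = (S : Subgroup G).index) : P.Normal := by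
  refine Subgroup.Normal.of_conjugate_fixed fun g => SetLike.coe_injective ?_
  have hconj : Nat.card (MulAut.conj g • P : Subgroup G) = (S : Subgroup G).index :=
    (Nat.card_congr (Subgroup.equivSMul _ P).toEquiv).symm.trans hP
  exact (coe_eq_compl_iUnion_sylow_diff_one hdisj hcard hconj).trans
    (coe_eq_compl_iUnion_sylow_diff_one hdisj hcard hP).symm

theorem normal_of_card_eq_index_sylow_of_normalCore_eq_bot {S : Sylow q G} {P : Subgroup G}
    (hindex : (S : Subgroup G).index.Prime) (hcore : (S : Subgroup G).normalCore = ⊥)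
    (hP : Nat.card P = (S : Subgroup G).index) : P.Normal := by
  rcases (Nat.dvd_prime hindex).1 S.card_dvd_index with hone | hcard
  · have : Subsingleton (Sylow q G) := (Nat.card_eq_one_iff_unique.1 hone).1
    have := S.normal_of_subsingleton
    rw [Subgroup.normalCore_eq_self] at hcore
    rw [hcore, Subgroup.index_bot] at hP
    rw [Subgroup.eq_top_of_card_eq P hP]
    infer_instance
  · exact normal_of_card_eq_index_sylow
      (pairwise_disjoint_sylow_of_normalCore_eq_bot hindex hcore) hcard hP

theorem isCyclic_and_exists_normal_of_normalCore_sylow_eq_bot {S : Sylow q G}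
    (hindex : (S : Subgroup G).index.Prime) (hcore : (S : Subgroup G).normalCore = ⊥) :
    IsCyclic S ∧ ∃ P : Subgroup G, P.Normal ∧ Nat.card P = (S : Subgroup G).index := by
  have : Fact (S : Subgroup G).index.Prime := ⟨hindex⟩
  obtain ⟨x, hx⟩ := exists_prime_orderOf_dvd_card' _ (S : Subgroup G).index_dvd_card
  have hP := (Nat.card_zpowers x).trans hx
  have hnormal := normal_of_card_eq_index_sylow_of_normalCore_eq_bot hindex hcore hP
  have hmul := (isComplement'_of_card_eq_index_sylow hP).mul_eq
  exact ⟨isCyclic_of_mul_eq_univ_of_prime_card (hP ▸ hindex) hmul hcore, _, hnormal, hP⟩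

end Sylow

theorem isCyclic_and_card_and_exists_normal_of_not_isNilpotent {G : Type*} [Group G] {p q n : ℕ}
    (hp : p.Prime) (hq : q.Prime) {H : Subgroup G} (hcore : H.normalCore = ⊥)
    (hnil : ¬ Group.IsNilpotent G) (hcard : Nat.card G = p * q ^ n) (hindex : H.index = p) :
    IsCyclic H ∧ Nat.card H = q ^ n ∧ ∃ P : Subgroup G, P.Normal ∧ Nat.card P = p := by
  have : Fact q.Prime := ⟨hq⟩
  have : Finite G := Nat.finite_of_card_ne_zero <|
    hcard ▸ mul_ne_zero hp.ne_zero (pow_ne_zero _ hq.ne_zero)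
  have hqp : q ≠ p := by
    rintro rfl
    have hG : IsPGroup q G := IsPGroup.of_card (hcard.trans (pow_succ' q n).symm)
    exact hnil hG.isNilpotent
  have hH : Nat.card H = q ^ n := by
    rw [← Nat.mul_right_inj hp.ne_zero, ← hcard, ← H.index_mul_card, hindex]
  have hqindex : ¬ q ∣ H.index := by rwa [hindex, Nat.prime_dvd_prime_iff_eq hq hp]
  let S : Sylow q G := (IsPGroup.of_card hH).toSylow hqindex
  obtain ⟨hcyclic, P, hPnormal, hP⟩ :=
    isCyclic_and_exists_normal_of_normalCore_sylow_eq_bot (S := S) (hindex.symm ▸ hp) hcore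
  exact ⟨hcyclic, hH, P, hPnormal, hP.trans hindex⟩

section KSubmodular

variable {G : Type*} [Group G] {k n : ℕ} {H K M : Subgroup G}

theorem modularlyEmbedded_top_iff : ModularlyEmbedded n M ⊤ ↔
    M.Normal ∨ ∃ p q : ℕ, p.Prime ∧ q.Prime ∧ ¬ Group.IsNilpotent (G ⧸ M.normalCore) ∧
      Nat.card (G ⧸ M.normalCore) = p * q ^ n ∧ M.index = p := by
  have hsurj : Function.Surjective (⊤ : Subgroup G).subtype := fun x => ⟨⟨x, trivial⟩, rfl⟩
  have hnormal : (M.subgroupOf ⊤).Normal ↔ M.Normal :=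
    Subgroup.normal_comap_iff_of_surjective hsurj
  have hindex : (M.subgroupOf ⊤).index = M.index := Subgroup.index_comap_of_surjective M hsurj
  let e := QuotientGroup.congr _ _ Subgroup.topEquiv (map_topEquiv_normalCore_subgroupOf M)
  have hnil : Group.IsNilpotent ((⊤ : Subgroup G) ⧸ (M.subgroupOf ⊤).normalCore) ↔
      Group.IsNilpotent (G ⧸ M.normalCore) :=
    ⟨fun _ => Group.nilpotent_of_mulEquiv e, fun _ => Group.nilpotent_of_mulEquiv e.symm⟩
  rw [ModularlyEmbedded, hnormal, hnil, Nat.card_congr e.toEquiv, hindex, and_iff_right le_top]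

theorem ModularlyEmbedded.kSubmodularIn (hn : 0 < n) (hnk : n ≤ k)
    (h : ModularlyEmbedded n H K) : KSubmodularIn k H K := by
  refine ⟨1, fun i => if i = 0 then H else K, rfl, rfl, fun i hi => ⟨n, hn, hnk, ?_⟩⟩
  obtain rfl : i = 0 := Nat.lt_one_iff.1 hi
  exact h

theorem kSubmodularIn_iff_of_covBy (hHK : H ⋖ K) :
    KSubmodularIn k H K ↔ ∃ n, 0 < n ∧ n ≤ k ∧ ModularlyEmbedded n H K := by
  refine ⟨?_, fun ⟨n, hn, hnk, h⟩ => h.kSubmodularIn hn hnk⟩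
  rintro ⟨m, c, hc0, rfl, hstep⟩
  have hle_last : ∀ i ≤ m, c i ≤ c m := fun i hi =>
    Nat.decreasingInduction (motive := fun j _ => c j ≤ c m)
      (fun j hj ih => (hstep j hj).elim fun _ h => h.2.2.1.trans ih) le_rfl hi
  obtain ⟨i, hstay, him, hleave⟩ := Nat.exists_not_and_succ_of_not_zero_of_exists
    (p := fun i => i ≤ m ∧ c i ≠ H) (fun h => h.2 hc0) ⟨m, le_rfl, hHK.ne'⟩
  have hci : c i = H := not_not.1 fun h => hstay ⟨Nat.le_of_succ_le him, h⟩
  obtain ⟨n, hn, hnk, h⟩ := hstep i him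
  rw [hci] at h
  have hlast : c (i + 1) = c m :=
    (hHK.eq_or_eq h.1 (hle_last _ him)).resolve_left hleave
  exact ⟨n, hn, hnk, hlast ▸ h⟩

end KSubmodular

theorem maximal_kSubmodular_iff_general {G : Type*} [Group G]
    {k : ℕ} (hk : 0 < k) {M : Subgroup G} (hmax : IsCoatom M) :
    KSubmodularIn k M ⊤ ↔
      (M.Normal ∨
        ∃ (p q n : ℕ), p.Prime ∧ q.Prime ∧ 0 < n ∧ n ≤ k ∧
          ¬ Group.IsNilpotent (G ⧸ M.normalCore) ∧
          Nat.card (G ⧸ M.normalCore) = p * q ^ n ∧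
          IsCyclic (M.map (QuotientGroup.mk' M.normalCore)) ∧
          Nat.card (M.map (QuotientGroup.mk' M.normalCore)) = q ^ n ∧
          ∃ P : Subgroup (G ⧸ M.normalCore), P.Normal ∧ Nat.card P = p) := by
  rw [kSubmodularIn_iff_of_covBy (covBy_top_iff.2 hmax)]
  simp only [modularlyEmbedded_top_iff]
  constructor
  · rintro ⟨n, hn, hnk, hM | ⟨p, q, hp, hq, hnil, hcard, hindex⟩⟩
    · exact Or.inl hM
    · obtain ⟨hcyclic, hMcard, hP⟩ := isCyclic_and_card_and_exists_normal_of_not_isNilpotent hp hq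
        (normalCore_map_mk'_normalCore M) hnil hcard ((index_map_mk'_normalCore M).trans hindex)
      exact Or.inr ⟨p, q, n, hp, hq, hn, hnk, hnil, hcard, hcyclic, hMcard, hP⟩
  · rintro (hM | ⟨p, q, n, hp, hq, hn, hnk, hnil, hcard, -, hMcard, -⟩)
    · exact ⟨1, one_pos, hk, Or.inl hM⟩
    · refine ⟨n, hn, hnk, Or.inr ⟨p, q, hp, hq, hnil, hcard, ?_⟩⟩
      rw [← Nat.mul_left_inj (pow_ne_zero n hq.ne_zero), ← hcard, ← index_map_mk'_normalCore M,
        ← hMcard, Subgroup.index_mul_card]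

/-- Lemma 3.2: a maximal subgroup `M` of `G` is `k`-submodular in `G` iff
either `M` is normal in `G`, or `G/Core_G(M)` is a non-nilpotent biprimary
group of order `p * q ^ n` (`n ≤ k`) whose image of `M` is a cyclic Sylow
`q`-subgroup of order `q ^ n` and which has a normal Sylow `p`-subgroup of
order `p`. -/
theorem maximal_kSubmodular_iff {G : Type*} [Group G] [Finite G]
    {k : ℕ} (hk : 0 < k) {M : Subgroup G} (hmax : IsCoatom M) :
    KSubmodularIn k M ⊤ ↔
      (M.Normal ∨
        ∃ (p q n : ℕ), p.Prime ∧ q.Prime ∧ 0 < n ∧ n ≤ k ∧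
          ¬ Group.IsNilpotent (G ⧸ M.normalCore) ∧
          Nat.card (G ⧸ M.normalCore) = p * q ^ n ∧
          IsCyclic (M.map (QuotientGroup.mk' M.normalCore)) ∧
          Nat.card (M.map (QuotientGroup.mk' M.normalCore)) = q ^ n ∧
          ∃ P : Subgroup (G ⧸ M.normalCore), P.Normal ∧ Nat.card P = p) :=
  maximal_kSubmodular_iff_general hk hmax
end

section
/- If every maximal subgroup of a finite group G is k-submodular in G, then G is supersoluble. -/
open Pointwise

/-- A group is supersolvable if it has a normal series with cyclic factors
(for finite groups this is equivalent to having a chief series all of whose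
factors are cyclic of prime order). -/
def IsSupersolvable (G : Type*) [Group G] : Prop :=
  ∃ (m : ℕ) (c : ℕ → Subgroup G), c 0 = ⊥ ∧ c m = ⊤ ∧
    (∀ i, (c i).Normal) ∧ (∀ i, i < m → c i ≤ c (i + 1)) ∧
    ∀ i, i < m → ∀ [_h : ((c i).subgroupOf (c (i + 1))).Normal],
      IsCyclic (↥(c (i + 1)) ⧸ (c i).subgroupOf (c (i + 1)))

/-!
In a chain witnessing that a maximal subgroup `M` is submodular, the last term equal to `M` is
modularly embedded in `G`, so `|G : M|` is prime. What remains is Huppert's theorem: if all maximal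
subgroups of `G` have prime index, then `G` has a normal series with factors of prime order.

Let `p` be the largest prime divisor of `|G|`. By Sylow counting the Sylow `p`-subgroup `P` is
normal. If a maximal subgroup `M` does not contain `P`, then `|G : M| = p`, so `G / Core M` embeds
in `Sym p` and the image of `P` has order `p`; hence `G` acts on it through an abelian group of
exponent `p - 1`. With `A` the smallest normal subgroup such that `G / A` is abelian of exponent
dividing `p - 1`, this gives `⁅P ⊔ A, P⁆ ≤ Φ(G)`. Now induct on `|G|`.
* If `A ≤ P`, then `G` acts on a minimal normal subgroup `N ≤ P` by commuting linear maps with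
  eigenvalues in `𝔽_p`, so `|N| = p`, and the series of `G / N` extends to `G`.
* Otherwise some normal `L ≤ P ⊔ A` has prime index `q ≠ p` over `P`. As `⁅L, P⁆ ≤ Φ(G)`, Frattini's
  argument makes a Sylow `q`-subgroup `Q` of `L` normal in `G`. Since `P ⊓ Q = ⊥`, the series of
  `G / P` and `G / Q` combine.
-/

open Subgroup

section PrimeNormalSeries

variable {G : Type*} [Group G] {A B N : Subgroup G}

/-- `B / A` is a normal section of `G` of prime order. -/
def PrimeNormalStep (A B : Subgroup G) : Prop :=
  A.Normal ∧ B.Normal ∧ A ≤ B ∧ (A.relIndex B).Prime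

/-- There is a series of normal subgroups of `G` from `A` up to `B` whose factors have prime order.
The case `A = ⊥`, `B = ⊤` is supersolvability of a finite group `G`. -/
def PrimeNormalSeries (A B : Subgroup G) : Prop :=
  Relation.ReflTransGen PrimeNormalStep A B

theorem exists_nat_chain_of_reflTransGen {α : Type*} {r : α → α → Prop} {a b : α}
    (h : Relation.ReflTransGen r a b) :
    ∃ (m : ℕ) (c : ℕ → α), c 0 = a ∧ (∀ i < m, r (c i) (c (i + 1))) ∧ ∀ i, m ≤ i → c i = b := by
  induction h using Relation.ReflTransGen.head_induction_on with
  | refl => exact ⟨0, fun _ ↦ b, rfl, by simp, fun _ _ ↦ rfl⟩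
  | @head a a' hstep _ ih =>
    obtain ⟨m, c, rfl, hc, hend⟩ := ih
    refine ⟨m + 1, fun i ↦ i.casesOn a c, rfl, ?_, ?_⟩
    · rintro (_ | i) hi
      · exact hstep
      · exact hc i (by lia)
    · rintro (_ | i) hi
      · lia
      · exact hend i (by lia)

theorem PrimeNormalSeries.isSupersolvable (h : PrimeNormalSeries (⊥ : Subgroup G) ⊤) :
    IsSupersolvable G := by
  obtain ⟨m, c, hbot, hstep, htop⟩ := exists_nat_chain_of_reflTransGen h
  refine ⟨m, c, hbot, htop m le_rfl, fun i ↦ ?_, fun i hi ↦ (hstep i hi).2.2.1, fun i hi _ ↦ ?_⟩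
  · rcases lt_or_ge i m with hi | hi
    · exact (hstep i hi).1
    · rw [htop i hi]
      infer_instance
  · have := Fact.mk (hstep i hi).2.2.2
    exact isCyclic_of_prime_card (p := (c i).relIndex (c (i + 1))) rfl

theorem PrimeNormalSeries.le (h : PrimeNormalSeries A B) : A ≤ B := by
  induction h with
  | refl => exact le_rfl
  | tail _ hstep ih => exact ih.trans hstep.2.2.1

theorem PrimeNormalSeries.exists_primeNormalStep (h : PrimeNormalSeries A B) (hne : A ≠ B) :
    ∃ E ≤ B, PrimeNormalStep A E := by
  rcases Relation.ReflTransGen.cases_head h with rfl | ⟨E, hstep, hseries⟩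
  · exact absurd rfl hne
  · exact ⟨E, PrimeNormalSeries.le hseries, hstep⟩

theorem relIndex_inf_dvd_relIndex_of_normal (A B N : Subgroup G) [A.Normal] (hAB : A ≤ B) :
    (A ⊓ N).relIndex (B ⊓ N) ∣ A.relIndex B := by
  have hinf : A ⊓ N = A ⊓ (B ⊓ N) := by rw [← inf_assoc, inf_eq_left.2 hAB]
  rw [hinf, inf_relIndex_right, ← relIndex_sup_left]
  exact Dvd.intro _ (relIndex_mul_relIndex A _ B le_sup_left (sup_le hAB inf_le_left))

theorem PrimeNormalStep.inf [N.Normal] (h : PrimeNormalStep A B) :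
    PrimeNormalSeries (A ⊓ N) (B ⊓ N) := by
  obtain ⟨hA, hB, hAB, hprime⟩ := h
  have hle : A ⊓ N ≤ B ⊓ N := inf_le_inf_right N hAB
  rcases (Nat.dvd_prime hprime).1 (relIndex_inf_dvd_relIndex_of_normal A B N hAB) with hone | heq
  · rw [le_antisymm hle (relIndex_eq_one.1 hone)]
    exact .refl
  · exact .single ⟨inferInstance, inferInstance, hle, heq ▸ hprime⟩

theorem PrimeNormalSeries.inf [N.Normal] (h : PrimeNormalSeries A B) :
    PrimeNormalSeries (A ⊓ N) (B ⊓ N) := by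
  induction h with
  | refl => exact .refl
  | tail _ hstep ih => exact Relation.ReflTransGen.trans ih hstep.inf

theorem PrimeNormalStep.comap {H : Type*} [Group H] {f : H →* G} (hf : Function.Surjective f)
    (h : PrimeNormalStep A B) : PrimeNormalStep (A.comap f) (B.comap f) := by
  obtain ⟨hA, hB, hAB, hprime⟩ := h
  refine ⟨inferInstance, inferInstance, comap_mono hAB, ?_⟩
  rwa [relIndex_comap, map_comap_eq_self_of_surjective hf]

theorem PrimeNormalSeries.of_quotient [N.Normal]
    (h : PrimeNormalSeries (⊥ : Subgroup (G ⧸ N)) ⊤) : PrimeNormalSeries N ⊤ := by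
  have hcomap : PrimeNormalSeries ((⊥ : Subgroup (G ⧸ N)).comap (QuotientGroup.mk' N))
      (comap (QuotientGroup.mk' N) ⊤) :=
    h.lift _ fun _ _ hstep ↦ hstep.comap (QuotientGroup.mk'_surjective N)
  rwa [MonoidHom.comap_bot, QuotientGroup.ker_mk', comap_top] at hcomap

theorem PrimeNormalSeries.of_quotients_of_inf_eq_bot [A.Normal] [B.Normal] (hAB : A ⊓ B = ⊥)
    (hA : PrimeNormalSeries (⊥ : Subgroup (G ⧸ A)) ⊤)
    (hB : PrimeNormalSeries (⊥ : Subgroup (G ⧸ B)) ⊤) :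
    PrimeNormalSeries (⊥ : Subgroup G) ⊤ := by
  have hBA : PrimeNormalSeries (B ⊓ A) (⊤ ⊓ A) := hB.of_quotient.inf
  rw [inf_comm, hAB, top_inf_eq] at hBA
  exact hBA.trans hA.of_quotient

theorem PrimeNormalSeries.of_quotient_of_prime_card [N.Normal] (hprime : (Nat.card N).Prime)
    (h : PrimeNormalSeries (⊥ : Subgroup (G ⧸ N)) ⊤) : PrimeNormalSeries (⊥ : Subgroup G) ⊤ :=
  h.of_quotient.head ⟨inferInstance, inferInstance, bot_le, by rwa [relIndex_bot_left]⟩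

end PrimeNormalSeries

section MaximalSubgroups

variable {G : Type*} [Group G] {M : Subgroup G}

theorem prime_index_of_isCoatom_of_normal [M.Normal] (hM : IsCoatom M) : M.index.Prime := by
  have hmk := QuotientGroup.mk'_surjective M
  have hquot : ∀ K : Subgroup (G ⧸ M), K ≠ ⊥ → K = ⊤ := fun K hK ↦ by
    have hlt : M < K.comap (QuotientGroup.mk' M) := by
      rw [← bot_lt_iff_ne_bot, ← comap_lt_comap_of_surjective hmk] at hK
      simpa only [MonoidHom.comap_bot, QuotientGroup.ker_mk'] using hK
    exact comap_injective hmk (by rw [hM.2 _ hlt, comap_top])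
  have hnontrivial : Nontrivial (G ⧸ M) := QuotientGroup.nontrivial_iff.2 hM.1
  obtain ⟨x, hx⟩ := exists_ne (1 : G ⧸ M)
  have hcyclic : IsCyclic (G ⧸ M) :=
    isCyclic_iff_exists_zpowers_eq_top.2 ⟨x, hquot _ (zpowers_ne_bot.2 hx)⟩
  have hcomm := hcyclic.isMulCommutative
  have hsimple : IsSimpleGroup (G ⧸ M) :=
    ⟨fun K _ ↦ or_iff_not_imp_left.2 (hquot K)⟩
  exact Group.is_simple_iff_prime_card.1 hsimple

theorem ModularlyEmbedded.prime_index {n : ℕ} (h : ModularlyEmbedded n M ⊤) (hM : IsCoatom M) :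
    M.index.Prime := by
  obtain ⟨-, hnormal | ⟨p, -, hp, -, -, -, hindex⟩⟩ := h
  · have : M.Normal := normalizer_eq_top_iff.1 <|
      top_le_iff.1 (normal_subgroupOf_iff_le_normalizer le_top |>.1 hnormal)
    exact prime_index_of_isCoatom_of_normal hM
  · rw [← relIndex_top_right, relIndex, hindex]
    exact hp

theorem KSubmodularIn.prime_index {k : ℕ} (h : KSubmodularIn k M ⊤) (hM : IsCoatom M) :
    M.index.Prime := by
  obtain ⟨m, c, hzero, htop, hstep⟩ := h
  obtain ⟨i, hi, hsucc⟩ := Nat.exists_not_and_succ_of_not_zero_of_exists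
    (p := fun i ↦ i ≤ m → c i ≠ M) (by simp [hzero]) ⟨m, fun _ ↦ htop ▸ hM.1.symm⟩
  push Not at hi
  obtain ⟨him, hciM⟩ := hi
  have hlt : i < m := him.lt_of_ne fun heq ↦ hM.1 (by rw [← hciM, heq, htop])
  obtain ⟨n, -, -, hembedded⟩ := hstep i hlt
  rw [hciM] at hembedded
  rw [hM.2 _ (hembedded.1.lt_of_ne' (hsucc hlt))] at hembedded
  exact hembedded.prime_index hM

theorem prime_index_of_isCoatom_quotient (N : Subgroup G) [N.Normal]
    (hG : ∀ M : Subgroup G, IsCoatom M → M.index.Prime) (M : Subgroup (G ⧸ N))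
    (hM : IsCoatom M) : M.index.Prime := by
  have hmk := QuotientGroup.mk'_surjective N
  rw [← index_comap_of_surjective M hmk]
  exact hG _ (isCoatom_comap_of_surjective hmk hM)

end MaximalSubgroups

section SylowSubgroups

variable {G : Type*} [Group G] [Finite G] {p : ℕ} [Fact p.Prime]

theorem index_modEq_one_of_normalizer_le (P : Sylow p G) {M : Subgroup G}
    (hM : normalizer (P : Set G) ≤ M) : M.index ≡ 1 [MOD p] := by
  have hPM : (P : Subgroup G) ≤ M := le_normalizer.trans hM
  have hnormalizer : normalizer ((P.subtype hPM : Subgroup M) : Set M) =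
      (normalizer (P : Set G)).subgroupOf M := by
    rw [Sylow.coe_subtype]
    exact (subgroupOf_normalizer_eq hPM).symm
  have hcard : Nat.card (Sylow p M) * M.index = Nat.card (Sylow p G) := by
    rw [(P.subtype hPM).card_eq_index_normalizer, P.card_eq_index_normalizer,
      ← relIndex_mul_index hM, relIndex, ← hnormalizer]
    rfl
  calc M.index = 1 * M.index := (one_mul _).symm
    _ ≡ Nat.card (Sylow p M) * M.index [MOD p] := (card_sylow_modEq_one p M).symm.mul_right _
    _ = Nat.card (Sylow p G) := hcard
    _ ≡ 1 [MOD p] := card_sylow_modEq_one p G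

theorem sylow_normal_of_prime_index (hG : ∀ M : Subgroup G, IsCoatom M → M.index.Prime)
    (hp : ∀ q, q.Prime → q ∣ Nat.card G → q ≤ p) (P : Sylow p G) : (P : Subgroup G).Normal := by
  rw [← normalizer_eq_top_iff]
  refine (eq_top_or_exists_le_coatom _).resolve_right ?_
  rintro ⟨M, hM, hle⟩
  have hprime : M.index.Prime := hG M hM
  have hindex_le : M.index ≤ p := hp _ hprime M.index_dvd_card
  have hdvd : p ∣ M.index - 1 :=
    (Nat.modEq_iff_dvd' hprime.one_le).1 (index_modEq_one_of_normalizer_le P hle).symm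
  have := Nat.le_of_dvd (Nat.sub_pos_of_lt hprime.one_lt) hdvd
  have := hprime.one_lt
  lia

theorem normalizer_sup_eq_top_of_not_dvd_relIndex {Q N : Subgroup G} [N.Normal]
    (hQ : IsPGroup p Q) (hQN : Q ≤ N) (hindex : ¬ p ∣ Q.relIndex N) :
    normalizer (Q : Set G) ⊔ N = ⊤ := by
  have hQ' : IsPGroup p (Q.subgroupOf N) := hQ.comap_subtype
  rw [← map_subgroupOf_eq_of_le hQN]
  exact Sylow.normalizer_sup_eq_top (hQ'.toSylow hindex)

theorem exists_isPGroup_le_not_dvd_relIndex (p : ℕ) [Fact p.Prime] (L : Subgroup G) :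
    ∃ Q ≤ L, IsPGroup p Q ∧ ¬ p ∣ Q.relIndex L := by
  obtain ⟨Q⟩ : Nonempty (Sylow p L) := inferInstance
  refine ⟨Q.map L.subtype, map_subtype_le _, Q.isPGroup'.map _, ?_⟩
  rw [relIndex, subgroupOf, comap_map_eq_self_of_injective L.subtype_injective]
  exact Q.not_dvd_index

/- Frattini's argument is applied twice: in `L` it shows that `Q ⊔ ⁅L, P⁆` is normal, and in
`Q ⊔ ⁅L, P⁆` that `Q` is, since `⁅L, P⁆` consists of nongenerators. -/
theorem exists_normal_disjoint_of_commutator_le_frattini {q : ℕ} {P L : Subgroup G} [L.Normal]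
    [P.Normal] (hP : IsPGroup p P) (hq : q.Prime) (hqp : q ≠ p)
    (hindex : P.relIndex L = q) (hfrattini : ⁅L, P⁆ ≤ frattini G) :
    ∃ Q : Subgroup G, Q.Normal ∧ Q ≠ ⊥ ∧ P ⊓ Q = ⊥ := by
  have := Fact.mk hq
  obtain ⟨Q, hQL, hQ, hQindex⟩ := exists_isPGroup_le_not_dvd_relIndex q L
  have hLQP : L ≤ Q ⊔ P := by
    rw [← relIndex_eq_one]
    have hdvd : (Q ⊔ P).relIndex L ∣ q := hindex ▸ relIndex_dvd_of_le_left L le_sup_right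
    refine ((Nat.dvd_prime hq).1 hdvd).resolve_right fun heq ↦ hQindex ?_
    exact heq ▸ relIndex_dvd_of_le_left L le_sup_left
  have hsup : normalizer (Q : Set G) ⊔ P = ⊤ := by
    rw [eq_top_iff, ← normalizer_sup_eq_top_of_not_dvd_relIndex hQ hQL hQindex]
    exact sup_le le_sup_left (hLQP.trans (sup_le_sup_right le_normalizer P))
  have hle : Q ⊔ ⁅L, P⁆ ≤ L := sup_le hQL (commutator_le_left L P)
  have hnormal : (Q ⊔ ⁅L, P⁆).Normal := by
    rw [← normalizer_eq_top_iff, eq_top_iff, ← hsup]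
    refine sup_le ?_ ?_
    · refine le_trans ?_ (normalizer_inf_normalizer_le_normalizer_sup Q ⁅L, P⁆)
      exact le_inf le_rfl le_normalizer_of_normal
    · exact le_normalizer_iff_commutator_le_left.2 ((commutator_mono hle le_rfl).trans le_sup_right)
  have hQindex' : ¬ q ∣ Q.relIndex (Q ⊔ ⁅L, P⁆) := fun h ↦
    hQindex ((h.mul_right _).trans (relIndex_mul_relIndex Q _ L le_sup_left hle).dvd)
  have htop : normalizer (Q : Set G) = ⊤ := by
    apply frattini_nongenerating
    rw [eq_top_iff, ← normalizer_sup_eq_top_of_not_dvd_relIndex hQ le_sup_left hQindex']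
    exact sup_le le_sup_left (sup_le_sup le_normalizer hfrattini)
  refine ⟨Q, normalizer_eq_top_iff.1 htop, ?_, (hP.disjoint_of_ne p q hqp.symm P Q hQ).eq_bot⟩
  rintro rfl
  rw [relIndex_bot_left, ← hindex] at hQindex
  exact hQindex (relIndex_dvd_card P L)

end SylowSubgroups

section AbelianResidual

variable {G H : Type*} [Group G] [Group H] {n : ℕ}

/-- The smallest normal subgroup of `G` whose quotient is abelian of exponent dividing `n`. For
`n = p - 1` it acts trivially on every normal subgroup of order `p`. -/
def abelianResidual (G : Type*) [Group G] (n : ℕ) : Subgroup G :=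
  commutator G ⊔ closure (Set.range fun g : G ↦ g ^ n)

theorem commutator_le_abelianResidual (n : ℕ) : commutator G ≤ abelianResidual G n :=
  le_sup_left

theorem pow_mem_abelianResidual (n : ℕ) (g : G) : g ^ n ∈ abelianResidual G n :=
  le_sup_right (a := commutator G) (subset_closure ⟨g, rfl⟩)

theorem map_abelianResidual_le (f : G →* H) (n : ℕ) :
    (abelianResidual G n).map f ≤ abelianResidual H n := by
  rw [abelianResidual, Subgroup.map_sup, MonoidHom.map_closure, commutator_def, map_commutator]
  refine sup_le_sup (commutator_mono le_top le_top) (closure_mono ?_)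
  rintro _ ⟨_, ⟨g, rfl⟩, rfl⟩
  exact ⟨f g, (map_pow f g n).symm⟩

theorem abelianResidual_le_ker [IsMulCommutative H] (f : G →* H) (hH : ∀ h : H, h ^ n = 1) :
    abelianResidual G n ≤ f.ker := by
  refine sup_le (commutator_le.2 fun x _ y _ ↦ ?_) ((closure_le _).2 ?_)
  · rw [MonoidHom.mem_ker, map_commutatorElement, commutatorElement_eq_one_iff_mul_comm, mul_comm']
  · rintro _ ⟨g, rfl⟩
    simp [hH]

theorem ker_conjNormal (N : Subgroup G) [N.Normal] :
    (MulAut.conjNormal : G →* MulAut N).ker = centralizer N := by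
  ext g
  simp [DFunLike.ext_iff, Subtype.ext_iff, mem_centralizer_iff, eq_mul_inv_iff_mul_eq, eq_comm]

theorem abelianResidual_le_centralizer {p : ℕ} (hp : p.Prime) {Q : Subgroup G} [Q.Normal]
    (hQ : Nat.card Q ∣ p) : abelianResidual G (p - 1) ≤ centralizer Q := by
  have := Fact.mk hp
  have hfinite : Finite Q := Nat.finite_of_card_ne_zero (ne_zero_of_dvd_ne_zero hp.ne_zero hQ)
  have hcyclic : IsCyclic Q := isCyclic_of_card_dvd_prime hQ
  have hcomm : IsMulCommutative (MulAut Q) :=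
    ⟨⟨fun φ ψ ↦ (IsCyclic.mulAutMulEquiv Q).injective (by simp only [map_mul, mul_comm])⟩⟩
  have hdvd : Nat.card (MulAut Q) ∣ p - 1 := by
    rw [IsCyclic.card_mulAut, ← Nat.totient_prime hp]
    exact Nat.totient_dvd_of_dvd hQ
  rw [← ker_conjNormal]
  exact abelianResidual_le_ker _ fun φ ↦
    orderOf_dvd_iff_pow_eq_one.1 ((orderOf_dvd_natCard φ).trans hdvd)

theorem le_centralizer_self_of_card_dvd_prime {p : ℕ} (hp : p.Prime) {Q : Subgroup G}
    (hQ : Nat.card Q ∣ p) : Q ≤ centralizer Q := by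
  have := Fact.mk hp
  have hcyclic : IsCyclic Q := isCyclic_of_card_dvd_prime hQ
  have := hcyclic.isMulCommutative
  exact le_centralizer_iff_isMulCommutative.2 this

end AbelianResidual

section FrattiniCommutator

variable {G : Type*} [Group G]

theorem index_normalCore_dvd_factorial_index (M : Subgroup G) [M.FiniteIndex] :
    M.normalCore.index ∣ M.index.factorial := by
  rw [normalCore_eq_ker, index_ker, index_eq_card M, ← Nat.card_perm]
  exact card_subgroup_dvd_card _

theorem relIndex_eq_index_of_sup_eq_top {M P : Subgroup G} [P.Normal] [P.FiniteIndex]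
    (hsup : M ⊔ P = ⊤) : M.relIndex P = M.index := by
  have hP : P.relIndex M = P.index := by
    rw [← relIndex_sup_right, hsup, relIndex_top_right]
  have hinf : M.relIndex P * P.index = P.index * M.index := by
    rw [← inf_relIndex_right, relIndex_mul_index inf_le_right, ← hP, ← inf_relIndex_left,
      relIndex_mul_index inf_le_left]
  rw [mul_comm] at hinf
  exact Nat.eq_of_mul_eq_mul_left (Nat.pos_of_ne_zero FiniteIndex.index_ne_zero) hinf

variable {p : ℕ} [hp : Fact p.Prime]

theorem card_dvd_prime_of_dvd_factorial [Finite G] (hG : IsPGroup p G)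
    (hdvd : Nat.card G ∣ p.factorial) : Nat.card G ∣ p := by
  obtain ⟨a, ha⟩ := IsPGroup.iff_card.1 hG
  have hcoprime : (Nat.card G).Coprime (p - 1).factorial :=
    ha ▸ (hp.out.coprime_factorial_of_lt (Nat.pred_lt hp.out.ne_zero)).pow_left a
  rw [← Nat.mul_factorial_pred hp.out.ne_zero] at hdvd
  exact hcoprime.dvd_of_dvd_mul_right hdvd

variable [Finite G] {P M : Subgroup G}

theorem commutator_sup_abelianResidual_le_of_index_eq [P.Normal] (hP : IsPGroup p P)
    (hM : M.index = p) : ⁅P ⊔ abelianResidual G (p - 1), P⁆ ≤ M := by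
  let π := QuotientGroup.mk' M.normalCore
  have hnormal : (P.map π).Normal := Normal.map ‹_› π (QuotientGroup.mk'_surjective _)
  have hcard : Nat.card (P.map π) ∣ p := by
    refine card_dvd_prime_of_dvd_factorial (hP.map π) ((card_subgroup_dvd_card _).trans ?_)
    exact hM ▸ index_normalCore_dvd_factorial_index M
  have hcentral : (P ⊔ abelianResidual G (p - 1)).map π ≤ centralizer (P.map π) := by
    rw [Subgroup.map_sup]
    exact sup_le (le_centralizer_self_of_card_dvd_prime hp.out hcard)
      ((map_abelianResidual_le π _).trans (abelianResidual_le_centralizer hp.out hcard))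
  calc ⁅P ⊔ abelianResidual G (p - 1), P⁆ ≤ π.ker := by
        rw [← Subgroup.map_eq_bot_iff, map_commutator, commutator_eq_bot_iff_le_centralizer]
        exact hcentral
    _ = M.normalCore := QuotientGroup.ker_mk' _
    _ ≤ M := M.normalCore_le

theorem commutator_sup_abelianResidual_le_frattini [P.Normal] (hP : IsPGroup p P)
    (hG : ∀ M : Subgroup G, IsCoatom M → M.index.Prime) :
    ⁅P ⊔ abelianResidual G (p - 1), P⁆ ≤ frattini G := by
  refine le_iInf₂ fun M (hM : IsCoatom M) ↦ ?_
  by_cases hPM : P ≤ M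
  · exact (commutator_le_right _ P).trans hPM
  have hindex : M.index ∣ Nat.card P := by
    rw [← relIndex_eq_index_of_sup_eq_top (hM.2 _ (left_lt_sup.2 hPM))]
    exact relIndex_dvd_card M P
  obtain ⟨a, ha⟩ := IsPGroup.iff_card.1 hP
  have heq : M.index = p :=
    (Nat.prime_dvd_prime_iff_eq (hG M hM) hp.out).1 ((hG M hM).dvd_of_dvd_pow (ha ▸ hindex))
  exact commutator_sup_abelianResidual_le_of_index_eq hP heq

end FrattiniCommutator

section MinimalNormalSubgroups

open scoped IsMulCommutative

theorem exists_hasEigenvalue_of_splits {K V : Type*} [Field K] [AddCommGroup V] [Module K V]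
    [FiniteDimensional K V] [Nontrivial V] {T : Module.End K V} {f : Polynomial K} (hf : f ≠ 0)
    (hsplits : f.Splits) (hT : f.aeval T = 0) : ∃ μ, T.HasEigenvalue μ := by
  have hminpoly : (minpoly K T).Splits := hsplits.of_dvd hf (minpoly.dvd K T hT)
  obtain ⟨μ, hμ⟩ := hminpoly.exists_eval_eq_zero
    (minpoly.degree_pos (Algebra.IsIntegral.isIntegral T)).ne'
  exact ⟨μ, Module.End.hasEigenvalue_of_isRoot hμ⟩

theorem exists_hasEigenvalue_of_pow_eq_one {V : Type*} [AddCommGroup V] [Finite V] [Nontrivial V]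
    {p : ℕ} [hp : Fact p.Prime] [Module (ZMod p) V] {T : Module.End (ZMod p) V}
    (hT : T ^ (p - 1) = 1) : ∃ μ, T.HasEigenvalue μ := by
  have hTp : T ^ p = T := by rw [← mul_pow_sub_one hp.out.ne_zero, hT, mul_one]
  have hsplits : (.X ^ p - .X : Polynomial (ZMod p)).Splits := by
    simpa using FiniteField.splits_X_pow_card_sub_X (K := ZMod p) p
  exact exists_hasEigenvalue_of_splits
    (FiniteField.X_pow_card_sub_X_ne_zero _ hp.out.one_lt) hsplits (by simp [hTp])

theorem exists_map_eq_pow_of_pow_eq_one {A : Type*} [CommGroup A] [Finite A] [Nontrivial A]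
    {p : ℕ} [Fact p.Prime] (hA : ∀ a : A, a ^ p = 1) {φ : MulAut A} (hφ : φ ^ (p - 1) = 1) :
    ∃ (n : ℕ) (a : A), a ≠ 1 ∧ φ a = a ^ n := by
  have : Module (ZMod p) (Additive A) := AddCommGroup.zmodModule fun x ↦ hA x.toMul
  let T : Module.End (ZMod p) (Additive A) := φ.toMonoidHom.toAdditive.toZModLinearMap p
  have hiterate : φ^[p - 1] = id := by
    rw [show ⇑φ = (φ • ·) from rfl, smul_iterate, hφ]
    rfl
  have hT : T ^ (p - 1) = 1 := LinearMap.ext fun a ↦ by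
    rw [Module.End.pow_apply]
    exact congrFun hiterate a.toMul
  obtain ⟨μ, hμ⟩ := exists_hasEigenvalue_of_pow_eq_one hT
  obtain ⟨v, hv⟩ := hμ.exists_hasEigenvector
  refine ⟨μ.val, v.toMul, hv.2, ?_⟩
  calc φ v.toMul = (μ • v).toMul := congrArg Additive.toMul hv.apply_eq_smul
    _ = v.toMul ^ μ.val := by
      rw [← toMul_nsmul, ← Nat.cast_smul_eq_nsmul (ZMod p), ZMod.natCast_zmod_val]

variable {G : Type*} [Group G] {p : ℕ} {N P : Subgroup G}

/-- `N` is a minimal normal subgroup of `G`, that is, minimal among the nontrivial ones. -/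
def IsMinimalNormal (N : Subgroup G) : Prop :=
  Minimal (fun K : Subgroup G ↦ K.Normal ∧ K ≠ ⊥) N

theorem exists_isMinimalNormal_le [Finite G] [P.Normal] (hP : P ≠ ⊥) :
    ∃ N ≤ P, IsMinimalNormal N :=
  exists_minimal_le_of_wellFoundedLT _ P ⟨‹_›, hP⟩

theorem inf_centralizer_ne_bot [Fact p.Prime] [Finite N] [N.Normal] (hN : IsPGroup p N)
    (hP : IsPGroup p P) (hne : N ≠ ⊥) : N ⊓ centralizer P ≠ ⊥ := by
  let : MulAction P N := MulAction.compHom N ((MulAut.conjNormal : G →* MulAut N).comp P.subtype)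
  have hsmul (g : P) (x : N) : ((g • x : N) : G) = g * x * (g : G)⁻¹ := rfl
  have hnontrivial : Nontrivial N := (nontrivial_iff_ne_bot N).2 hne
  obtain ⟨n, hn, hcard⟩ := hN.nontrivial_iff_card.1 hnontrivial
  have hone : (1 : N) ∈ MulAction.fixedPoints P N := fun g ↦ Subtype.ext (by simp [hsmul])
  obtain ⟨x, hx, hx1⟩ := hP.exists_fixed_point_of_prime_dvd_card_of_fixed_point N
    (hcard ▸ dvd_pow_self p hn.ne') hone
  refine ne_bot_iff_exists_ne_one.2 ⟨⟨x, x.2, mem_centralizer_iff.2 fun g hg ↦ ?_⟩, ?_⟩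
  · exact mul_inv_eq_iff_eq_mul.1 (congrArg Subtype.val (hx ⟨g, hg⟩))
  · exact fun h ↦ hx1 (Subtype.ext (congrArg Subtype.val h).symm)

theorem IsMinimalNormal.le_centralizer [Fact p.Prime] [Finite N] [P.Normal]
    (hN : IsMinimalNormal N) (hP : IsPGroup p P) (hNP : N ≤ P) : N ≤ centralizer P := by
  have := hN.prop.1
  have hinf : N ⊓ centralizer P ≠ ⊥ := inf_centralizer_ne_bot (hP.to_le hNP) hP hN.prop.2
  exact inf_eq_left.1 (hN.eq_of_le ⟨inferInstance, hinf⟩ inf_le_left)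

-- This is Schur's lemma: the equalizer of two equivariant endomorphisms is normal in `G`.
theorem IsMinimalNormal.hom_eq_of_apply_eq [N.Normal] (hN : IsMinimalNormal N) {φ ψ : N →* N}
    (hφ : ∀ (g : G) x, φ (MulAut.conjNormal g x) = MulAut.conjNormal g (φ x))
    (hψ : ∀ (g : G) x, ψ (MulAut.conjNormal g x) = MulAut.conjNormal g (ψ x))
    {x : N} (hx : x ≠ 1) (heq : φ x = ψ x) : φ = ψ := by
  let E : Subgroup G := (φ.eqLocus ψ).map N.subtype
  have hnormal : E.Normal := ⟨by
    rintro _ ⟨y, hy : φ y = ψ y, rfl⟩ g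
    exact ⟨MulAut.conjNormal g y, (hφ g y).trans (hy ▸ (hψ g y).symm), rfl⟩⟩
  have hne : E ≠ ⊥ := fun hbot ↦
    hx (Subtype.ext (mem_bot.1 (hbot ▸ mem_map_of_mem N.subtype (show x ∈ φ.eqLocus ψ from heq))))
  have htop : φ.eqLocus ψ = ⊤ := by
    rw [← comap_map_eq_self_of_injective N.subtype_injective (φ.eqLocus ψ), ← subgroupOf,
      subgroupOf_eq_top]
    exact hN.le_of_le ⟨hnormal, hne⟩ (map_subtype_le _)
  exact MonoidHom.eq_of_eqOn_top fun y _ ↦ htop.ge (mem_top y)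

theorem IsMinimalNormal.pow_eq_one [Finite N] [hp : Fact p.Prime] [N.Normal] [IsMulCommutative N]
    (hN : IsMinimalNormal N) (hdvd : p ∣ Nat.card N) (x : N) : x ^ p = 1 := by
  obtain ⟨y, hy⟩ := exists_prime_orderOf_dvd_card' p hdvd
  have hy1 : y ≠ 1 := fun h ↦ hp.out.ne_one (by rw [← hy, h, orderOf_one])
  have hpow : powMonoidHom p = (1 : N →* N) :=
    hN.hom_eq_of_apply_eq (fun g x ↦ (map_pow _ x p).symm) (by simp) hy1
      (orderOf_dvd_iff_pow_eq_one.1 hy.dvd)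
  exact DFunLike.congr_fun hpow x

theorem IsMinimalNormal.exists_conjNormal_eq_pow [Finite N] [Fact p.Prime] [N.Normal]
    [IsMulCommutative N] (hN : IsMinimalNormal N) (hdvd : p ∣ Nat.card N)
    (hcentral : abelianResidual G (p - 1) ≤ centralizer N) (g : G) :
    ∃ n : ℕ, ∀ x : N, MulAut.conjNormal g x = x ^ n := by
  have hnontrivial : Nontrivial N := (nontrivial_iff_ne_bot N).2 hN.prop.2
  rw [← ker_conjNormal] at hcentral
  have hpow : (MulAut.conjNormal g : MulAut N) ^ (p - 1) = 1 := by
    rw [← map_pow]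
    exact hcentral (pow_mem_abelianResidual _ g)
  have hcomm (h : G) : Commute (MulAut.conjNormal g : MulAut N) (MulAut.conjNormal h) := by
    rw [← commutatorElement_eq_one_iff_commute, ← map_commutatorElement]
    exact hcentral (commutator_le_abelianResidual _
      (commutator_mem_commutator (mem_top g) (mem_top h)))
  obtain ⟨n, x, hx, heq⟩ := exists_map_eq_pow_of_pow_eq_one (hN.pow_eq_one hdvd) hpow
  have hhom : (MulAut.conjNormal g : MulAut N).toMonoidHom = powMonoidHom n :=
    hN.hom_eq_of_apply_eq (fun h y ↦ DFunLike.congr_fun (hcomm h) y)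
      (fun h y ↦ (map_pow _ y n).symm) hx heq
  exact ⟨n, DFunLike.congr_fun hhom⟩

theorem IsMinimalNormal.card_eq_prime [Finite N] [hp : Fact p.Prime] [N.Normal]
    [IsMulCommutative N] (hN : IsMinimalNormal N) (hdvd : p ∣ Nat.card N)
    (hcentral : abelianResidual G (p - 1) ≤ centralizer N) : Nat.card N = p := by
  obtain ⟨y, hy⟩ := exists_prime_orderOf_dvd_card' p hdvd
  have hnormal : (zpowers (y : G)).Normal := ⟨by
    rintro _ ⟨i, rfl⟩ g
    obtain ⟨n, hn⟩ := hN.exists_conjNormal_eq_pow hdvd hcentral g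
    exact ⟨i * n, by simpa [zpow_mul] using (congrArg Subtype.val (hn (y ^ i))).symm⟩⟩
  have hne : zpowers (y : G) ≠ ⊥ := by
    rw [zpowers_ne_bot, ← orderOf_eq_one_iff.ne, orderOf_coe, hy]
    exact hp.out.ne_one
  have heq := hN.eq_of_le ⟨hnormal, hne⟩ (zpowers_le.2 y.2)
  rw [← heq, Nat.card_zpowers, orderOf_coe, hy]

theorem exists_normal_card_eq_prime [Finite G] [Fact p.Prime] [P.Normal] (hP : IsPGroup p P)
    (hne : P ≠ ⊥) (hle : abelianResidual G (p - 1) ≤ P) :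
    ∃ N : Subgroup G, N.Normal ∧ Nat.card N = p := by
  obtain ⟨N, hNP, hN⟩ := exists_isMinimalNormal_le hne
  have hnormal := hN.prop.1
  have hcentral : P ≤ centralizer N := le_centralizer_iff.1 (hN.le_centralizer hP hNP)
  have hcomm : IsMulCommutative N := le_centralizer_iff_isMulCommutative.1 (hNP.trans hcentral)
  obtain ⟨n, hn, hcard⟩ :=
    (hP.to_le hNP).nontrivial_iff_card.1 ((nontrivial_iff_ne_bot N).2 hN.prop.2)
  exact ⟨N, hnormal, hN.card_eq_prime (hcard ▸ dvd_pow_self p hn.ne') (hle.trans hcentral)⟩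

end MinimalNormalSubgroups

section Huppert

variable {G : Type*} [Group G] [Finite G]

theorem card_quotient_lt {N : Subgroup G} (hN : N ≠ ⊥) :
    Nat.card (G ⧸ N) < Nat.card G := by
  have hone : 1 < Nat.card N := N.one_lt_card_iff_ne_bot.2 hN
  rw [card_eq_card_quotient_mul_card_subgroup N]
  exact lt_mul_of_one_lt_right Nat.card_pos hone

theorem exists_max_prime_dvd {n : ℕ} (hn : 1 < n) :
    ∃ p, p.Prime ∧ p ∣ n ∧ ∀ q, q.Prime → q ∣ n → q ≤ p := by
  have hne : n.primeFactors.Nonempty := Nat.nonempty_primeFactors.2 hn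
  have hmem := Nat.mem_primeFactors.1 (n.primeFactors.max'_mem hne)
  exact ⟨_, hmem.1, hmem.2.1, fun q hq hdvd ↦
    Finset.le_max' _ q (Nat.mem_primeFactors.2 ⟨hq, hdvd, by lia⟩)⟩

theorem exists_normal_disjoint_of_not_abelianResidual_le {p : ℕ} [Fact p.Prime]
    (hG : ∀ M : Subgroup G, IsCoatom M → M.index.Prime) (P : Sylow p G) [(P : Subgroup G).Normal]
    (hquot : PrimeNormalSeries (⊥ : Subgroup (G ⧸ (P : Subgroup G))) ⊤)
    (hle : ¬ abelianResidual G (p - 1) ≤ P) :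
    ∃ Q : Subgroup G, Q.Normal ∧ Q ≠ ⊥ ∧ (P : Subgroup G) ⊓ Q = ⊥ := by
  let R : Subgroup G := P ⊔ abelianResidual G (p - 1)
  have hR : R.Normal := .of_commutator_le _ ((commutator_le_abelianResidual _).trans le_sup_right)
  have hseries : PrimeNormalSeries (P ⊓ R) (⊤ ⊓ R) := hquot.of_quotient.inf
  rw [inf_eq_left.2 le_sup_left, top_inf_eq] at hseries
  obtain ⟨L, hLR, -, hL, -, hprime⟩ :=
    hseries.exists_primeNormalStep (left_lt_sup.2 hle).ne
  have hne : (P : Subgroup G).relIndex L ≠ p := fun heq ↦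
    P.not_dvd_index (heq.symm.dvd.trans (relIndex_dvd_index_of_normal _ L))
  exact exists_normal_disjoint_of_commutator_le_frattini P.isPGroup' hprime hne rfl
    ((commutator_mono hLR le_rfl).trans
      (commutator_sup_abelianResidual_le_frattini P.isPGroup' hG))

theorem primeNormalSeries_of_prime_index (hG : ∀ M : Subgroup G, IsCoatom M → M.index.Prime) :
    PrimeNormalSeries (⊥ : Subgroup G) ⊤ := by
  induction hn : Nat.card G using Nat.strong_induction_on generalizing G with | _ n ih
  subst hn
  have hquot (N : Subgroup G) [N.Normal] (hN : N ≠ ⊥) :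
      PrimeNormalSeries (⊥ : Subgroup (G ⧸ N)) ⊤ :=
    ih _ (card_quotient_lt hN) (prime_index_of_isCoatom_quotient N hG) rfl
  rcases subsingleton_or_nontrivial G with hG' | hG'
  · rw [Subsingleton.elim (⊥ : Subgroup G) ⊤]
    exact .refl
  obtain ⟨p, hp, hdvd, hmax⟩ := exists_max_prime_dvd (Finite.one_lt_card (α := G))
  have := Fact.mk hp
  obtain ⟨P⟩ : Nonempty (Sylow p G) := inferInstance
  have hPnormal := sylow_normal_of_prime_index hG hmax P
  have hPne := P.ne_bot_of_dvd_card hdvd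
  by_cases hle : abelianResidual G (p - 1) ≤ P
  · obtain ⟨N, hN, hcard⟩ := exists_normal_card_eq_prime P.isPGroup' hPne hle
    have hprime : (Nat.card N).Prime := hcard ▸ hp
    exact .of_quotient_of_prime_card hprime
      (hquot N (N.one_lt_card_iff_ne_bot.1 hprime.one_lt))
  · obtain ⟨Q, hQ, hQne, hPQ⟩ :=
      exists_normal_disjoint_of_not_abelianResidual_le hG P (hquot P hPne) hle
    exact .of_quotients_of_inf_eq_bot hPQ (hquot P hPne) (hquot Q hQne)

end Huppert

/-- Lemma 3.3(1): if every maximal subgroup of `G` is `k`-submodular in `G`,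
then `G` is supersoluble. -/
theorem isSupersolvable_of_maximal_kSubmodular {G : Type*} [Group G] [Finite G]
    {k : ℕ} (hk : 0 < k)
    (hmax : ∀ M : Subgroup G, IsCoatom M → KSubmodularIn k M ⊤) :
    IsSupersolvable G := by
  have hprime (M : Subgroup G) (hM : IsCoatom M) : M.index.Prime := (hmax M hM).prime_index hM
  exact (primeNormalSeries_of_prime_index hprime).isSupersolvable
end

section
/- Let H and U be subgroups of a finite group G. If H is k-submodular in G, then H ∩ U is k-submodular in U. -/
open Pointwise

/-!
Being `k`-submodular is the reflexive transitive closure of the single steps of a chain, so it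
suffices to intersect one step `H ≤ K` with `U` and join `H ⊓ U` to `K ⊓ U` by a chain. Let
`T = H ⊓ U`, viewed in `V = K ⊓ U`. Normal steps restrict to normal steps. Otherwise
`|K : H| = p` and `|H : Core_K(H)| = q ^ n`, so `|V : T| ≤ p` divides `p * q ^ n` and
`|T : Core_V(T)|` divides `q ^ n`. If `V / Core_V(T)` is nilpotent, then `T` is subnormal in `V` and
normal steps suffice. If not, the order of `V / Core_V(T)` is not a prime power, which forces
`|V : T| = p` and `|V : Core_V(T)| = p * q ^ m` with `1 ≤ m ≤ n`.
-/

section Subnormal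

variable {A : Type*} [Group A]

theorem isSubnormal_of_isNilpotent [Group.IsNilpotent A] (T : Subgroup A) : T.IsSubnormal := by
  refine Group.nilpotent_center_quotient_ind (P := fun A _ _ => ∀ T : Subgroup A, T.IsSubnormal)
    A (fun A _ _ T => .of_subsingleton) (fun A _ _ ih T => ?_) T
  have sup_center_isSubnormal : (T ⊔ Subgroup.center A).IsSubnormal := by
    have := (ih (T.map (QuotientGroup.mk' (Subgroup.center A)))).comap (QuotientGroup.mk' _)
    rwa [Subgroup.comap_map_eq, QuotientGroup.ker_mk'] at this
  refine .step T _ le_sup_left sup_center_isSubnormal ?_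
  rw [Subgroup.normal_subgroupOf_iff_le_normalizer le_sup_left]
  exact sup_le Subgroup.le_normalizer (Subgroup.center_le_normalizer _)

theorem isSubnormal_of_isNilpotent_quotient {N T : Subgroup A} [N.Normal] (hNT : N ≤ T)
    [Group.IsNilpotent (A ⧸ N)] : T.IsSubnormal := by
  have := (isSubnormal_of_isNilpotent (T.map (QuotientGroup.mk' N))).comap (QuotientGroup.mk' N)
  rwa [Subgroup.comap_map_eq_self (by rwa [QuotientGroup.ker_mk'])] at this

end Subnormal

section NormalCore

variable {A B : Type*} [Group A] [Group B]

theorem comap_normalCore_le_normalCore_comap (f : A →* B) (S : Subgroup B) :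
    S.normalCore.comap f ≤ (S.comap f).normalCore :=
  Subgroup.normal_le_normalCore.2 (Subgroup.comap_mono S.normalCore_le)

theorem index_normalCore_comap_dvd (f : A →* B) (S : Subgroup B) :
    (S.comap f).normalCore.index ∣ S.normalCore.index :=
  calc (S.comap f).normalCore.index
    _ ∣ (S.normalCore.comap f).index :=
      Subgroup.index_dvd_of_le (comap_normalCore_le_normalCore_comap f S)
    _ = S.normalCore.relIndex f.range := Subgroup.index_comap _ f
    _ ∣ S.normalCore.index := Subgroup.relIndex_dvd_index_of_normal _ _

theorem relIndex_normalCore_comap_dvd (f : A →* B) (S : Subgroup B) :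
    (S.comap f).normalCore.relIndex (S.comap f) ∣ S.normalCore.relIndex S :=
  calc (S.comap f).normalCore.relIndex (S.comap f)
    _ ∣ (S.normalCore.comap f).relIndex (S.comap f) :=
      Subgroup.relIndex_dvd_of_le_left _ (comap_normalCore_le_normalCore_comap f S)
    _ = S.normalCore.relIndex ((S.comap f).map f) := Subgroup.relIndex_comap _ f _
    _ = (S.normalCore.subgroupOf S).relIndex (((S.comap f).map f).subgroupOf S) :=
      (Subgroup.relIndex_subgroupOf (Subgroup.map_comap_le f S)).symm
    _ ∣ S.normalCore.relIndex S := Subgroup.relIndex_dvd_index_of_normal _ _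

theorem index_comap_le (f : A →* B) (S : Subgroup B) [S.FiniteIndex] :
    (S.comap f).index ≤ S.index := by
  rw [Subgroup.index_comap, ← Subgroup.relIndex_top_right S]
  exact Subgroup.relIndex_le_of_le_right le_top
    (S.relIndex_top_right ▸ Subgroup.FiniteIndex.index_ne_zero)

end NormalCore

section PrimeIndex

variable {A B : Type*} [Group A] [Group B] {p q n : ℕ}

theorem isNilpotent_quotient_of_index_eq_prime_pow {N : Subgroup A} [N.Normal] (hp : p.Prime)
    (hN : N.index = p ^ n) : Group.IsNilpotent (A ⧸ N) :=
  have : Fact p.Prime := ⟨hp⟩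
  have : N.FiniteIndex := ⟨hN ▸ pow_ne_zero n hp.ne_zero⟩
  (IsPGroup.of_card hN).isNilpotent

theorem index_normalCore_eq_of_not_isNilpotent {T : Subgroup A} (hp : p.Prime) (hq : q.Prime)
    (hle : T.index ≤ p) (hdvd : T.index ∣ p * q ^ n) (hcore : T.normalCore.relIndex T ∣ q ^ n)
    (hnil : ¬ Group.IsNilpotent (A ⧸ T.normalCore)) :
    T.index = p ∧ ∃ m, 0 < m ∧ m ≤ n ∧ T.normalCore.index = p * q ^ m := by
  have hmul := Subgroup.relIndex_mul_index T.normalCore_le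
  obtain ⟨m, hmn, hm⟩ := (Nat.dvd_prime_pow hq).1 hcore
  have hp_dvd : p ∣ T.index := by
    by_contra hp_ndvd
    have hcoprime : T.index.Coprime p := ((Nat.Prime.coprime_iff_not_dvd hp).2 hp_ndvd).symm
    obtain ⟨j, -, hj⟩ := (Nat.dvd_prime_pow hq).1 (hcoprime.dvd_of_dvd_mul_left hdvd)
    refine hnil (isNilpotent_quotient_of_index_eq_prime_pow hq (n := m + j) ?_)
    rw [← hmul, hm, hj, pow_add]
  have hindex_pos : 0 < T.index :=
    Nat.pos_of_dvd_of_pos hdvd (Nat.mul_pos hp.pos (Nat.pow_pos hq.pos))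
  have hindex : T.index = p := hle.antisymm (Nat.le_of_dvd hindex_pos hp_dvd)
  have hindex_core : T.normalCore.index = p * q ^ m := by rw [← hmul, hm, hindex, mul_comm]
  refine ⟨hindex, m, Nat.pos_of_ne_zero ?_, hmn, hindex_core⟩
  rintro rfl
  exact hnil (isNilpotent_quotient_of_index_eq_prime_pow hp (n := 1) (by simpa using hindex_core))

theorem index_normalCore_comap_eq_of_not_isNilpotent (f : A →* B) {S : Subgroup B}
    (hp : p.Prime) (hq : q.Prime) (hcore : S.normalCore.index = p * q ^ n) (hindex : S.index = p)
    (hnil : ¬ Group.IsNilpotent (A ⧸ (S.comap f).normalCore)) :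
    (S.comap f).index = p ∧
      ∃ m, 0 < m ∧ m ≤ n ∧ (S.comap f).normalCore.index = p * q ^ m := by
  have : S.FiniteIndex := ⟨hindex ▸ hp.ne_zero⟩
  have hrel : S.normalCore.relIndex S = q ^ n := by
    have hmul := Subgroup.relIndex_mul_index S.normalCore_le
    rw [hcore, hindex, mul_comm] at hmul
    exact Nat.eq_of_mul_eq_mul_left hp.pos hmul
  have hdvd : (S.comap f).index ∣ p * q ^ n :=
    hcore ▸ (Subgroup.index_dvd_of_le (Subgroup.normalCore_le _)).trans
      (index_normalCore_comap_dvd f S)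
  exact index_normalCore_eq_of_not_isNilpotent hp hq (hindex ▸ index_comap_le f S) hdvd
    (hrel ▸ relIndex_normalCore_comap_dvd f S) hnil

end PrimeIndex

/-- `H` may directly precede `K` in a chain witnessing `k`-submodularity; `KSubmodularIn k` is the
reflexive transitive closure of this relation. -/
def KSubmodularStep {G : Type*} [Group G] (k : ℕ) (H K : Subgroup G) : Prop :=
  ∃ n : ℕ, 0 < n ∧ n ≤ k ∧ ModularlyEmbedded n H K

section KSubmodular

open Relation

variable {G : Type*} [Group G] {k : ℕ} {H K : Subgroup G}

theorem kSubmodularIn_iff_reflTransGen :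
    KSubmodularIn k H K ↔ ReflTransGen (KSubmodularStep k) H K := by
  constructor
  · rintro ⟨m, c, rfl, rfl, hc⟩
    induction m with
    | zero => exact .refl
    | succ m ih => exact (ih fun i hi => hc i (hi.trans m.lt_succ_self)).tail (hc m m.lt_succ_self)
  · intro h
    induction h using ReflTransGen.head_induction_on with
    | refl => exact ⟨0, fun _ => K, rfl, rfl, fun i hi => absurd hi i.not_lt_zero⟩
    | @head H _ hstep _ ih =>
      obtain ⟨m, c, rfl, hcm, hc⟩ := ih
      refine ⟨m + 1, fun i => Nat.casesOn i H c, rfl, hcm, ?_⟩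
      rintro (_ | i) hi
      · exact hstep
      · exact hc i (Nat.lt_of_succ_lt_succ hi)

theorem kSubmodularStep_of_normal (hk : 0 < k) (hHK : H ≤ K) (hnormal : (H.subgroupOf K).Normal) :
    KSubmodularStep k H K :=
  ⟨1, one_pos, hk, hHK, .inl hnormal⟩

theorem reflTransGen_kSubmodularStep_of_isSubnormal (hk : 0 < k) {T : Subgroup K}
    (hT : T.IsSubnormal) : ReflTransGen (KSubmodularStep k) (T.map K.subtype) K := by
  induction hT with
  | top => rw [← MonoidHom.range_eq_map, Subgroup.range_subtype]
  | step T S hTS _ hnormal ih =>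
    have hmap : T.map K.subtype ≤ S.map K.subtype := Subgroup.map_mono hTS
    refine .head (kSubmodularStep_of_normal hk hmap ?_) ih
    rw [Subgroup.normal_subgroupOf_iff_le_normalizer hTS] at hnormal
    rw [Subgroup.normal_subgroupOf_iff_le_normalizer hmap]
    exact (Subgroup.map_mono hnormal).trans (Subgroup.le_normalizer_map _)

theorem inf_subgroupOf_inf_eq_comap_inclusion (H K U : Subgroup G) :
    (H ⊓ U).subgroupOf (K ⊓ U) =
      (H.subgroupOf K).comap (Subgroup.inclusion (inf_le_left : K ⊓ U ≤ K)) := by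
  ext x
  simpa [Subgroup.mem_subgroupOf] using fun _ => x.2.2

theorem KSubmodularStep.reflTransGen_inf (h : KSubmodularStep k H K) (U : Subgroup G) :
    ReflTransGen (KSubmodularStep k) (H ⊓ U) (K ⊓ U) := by
  obtain ⟨n, hn, hnk, hHK, h⟩ := h
  have hk : 0 < k := hn.trans_le hnk
  have hle : H ⊓ U ≤ K ⊓ U := inf_le_inf_right U hHK
  have hcomap := inf_subgroupOf_inf_eq_comap_inclusion H K U
  obtain hnormal | ⟨p, q, hp, hq, -, hcard, hindex⟩ := h
  · exact .single (kSubmodularStep_of_normal hk hle (hcomap ▸ hnormal.comap _))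
  by_cases hnil : Group.IsNilpotent (↥(K ⊓ U) ⧸ ((H ⊓ U).subgroupOf (K ⊓ U)).normalCore)
  · have hsubnormal := isSubnormal_of_isNilpotent_quotient
      ((H ⊓ U).subgroupOf (K ⊓ U)).normalCore_le
    rw [← Subgroup.map_subgroupOf_eq_of_le hle]
    exact reflTransGen_kSubmodularStep_of_isSubnormal hk hsubnormal
  · obtain ⟨hindex', m, hm, hmn, hcard'⟩ :=
      index_normalCore_comap_eq_of_not_isNilpotent _ hp hq hcard hindex (hcomap ▸ hnil)
    rw [← hcomap] at hindex' hcard'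
    exact .single ⟨m, hm, hmn.trans hnk, hle, .inr ⟨p, q, hp, hq, hnil, hcard', hindex'⟩⟩

theorem kSubmodularIn_inf_of_kSubmodularIn_general (U : Subgroup G) (h : KSubmodularIn k H K) :
    KSubmodularIn k (H ⊓ U) (K ⊓ U) := by
  rw [kSubmodularIn_iff_reflTransGen] at h ⊢
  exact h.lift' (· ⊓ U) fun _ _ hstep => hstep.reflTransGen_inf U

end KSubmodular

/-- Lemma 3.5(1): if `H` is `k`-submodular in `G`, then `H ⊓ U` is
`k`-submodular in `U`. -/
theorem kSubmodularIn_inf_of_kSubmodularIn {G : Type*} [Group G] [Finite G]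
    {k : ℕ} (hk : 0 < k) {H : Subgroup G} (U : Subgroup G)
    (hsub : KSubmodularIn k H ⊤) : KSubmodularIn k (H ⊓ U) U := by
  simpa using kSubmodularIn_inf_of_kSubmodularIn_general U hsub
end

section
/- Let G be a finite group. Every subgroup of G is k-submodular in G if and only if G is supersoluble and for every chief factor H/K of G, the group G/C_G(H/K) is either trivial or cyclic of order q^n for some prime q and some natural number n ≤ k. -/
open Pointwise

/-- The centralizer C_G(H/K) of a factor `H/K`, where `H` and `K` are normal
subgroups of `G`: all `g` acting trivially on `H/K` by conjugation. -/
def chiefCentralizer {G : Type*} [Group G] (H K : Subgroup G)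
    (hH : H.Normal) (hK : K.Normal) : Subgroup G where
  carrier := {g | ∀ h ∈ H, g * h * g⁻¹ * h⁻¹ ∈ K}
  one_mem' := by intro h _; simpa using K.one_mem
  mul_mem' := by
    intro a b ha hb h hh
    have h2 : b * h * b⁻¹ ∈ H := hH.conj_mem h hh b
    have hmem := K.mul_mem (ha _ h2) (hb h hh)
    convert hmem using 1
    group
  inv_mem' := by
    intro a ha h hh
    have h2 : a⁻¹ * h * a ∈ H := by simpa using hH.conj_mem h hh a⁻¹
    have k1 := K.inv_mem (ha _ h2)
    convert k1 using 1
    group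

/-- `H/K` is a chief factor of `G`: both are normal in `G`, `K < H`, and there
is no normal subgroup of `G` strictly between `K` and `H`. -/
def IsChiefFactor {G : Type*} [Group G] (H K : Subgroup G) : Prop :=
  H.Normal ∧ K.Normal ∧ K < H ∧
    ∀ L : Subgroup G, L.Normal → K ≤ L → L ≤ H → L = K ∨ L = H

/-!
If `H/K` is a normal section of prime order and `W ∩ H = K`, then the core of `W` in `WH` is
`W ∩ C_G(H/K)`. Since a subgroup of prime index with nilpotent quotient by its core is normal, `W`
is `n`-modularly embedded in `WH` exactly when `W` centralizes `H/K` or `|W : W ∩ C_G(H/K)| = q ^ n`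
for a prime `q`.

Suppose every subgroup is `k`-submodular, and let `p` be the largest prime divisor of `|G|`. Each
step of a chain is normal or of prime index `r ≤ p`, and `r` cannot be a number `≡ 1 mod p` of
Sylow subgroups, so normality of a Sylow `p`-subgroup `P` climbs its chain up to `G`. Take a minimal
normal subgroup `N ≤ Z(P)` and a complement `Q` of `P`, so that `Q` and `C_G(N)` generate `G`. At
the step `A ≤ B` where `N` enters a chain from `Q` to `G` we have `A ∩ N = 1`; if `A` is normal in
`B` then `N` is central, and otherwise `|N| ≤ |B : A| ≤ p`, so in both cases `|N|` is prime.
Passing to quotients, `G` is supersoluble. For a chief factor `H/K` of prime order `p`, the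
group `G/C_G(H/K)` is cyclic of order dividing `p - 1`, so it is generated by the image of some `g`
of order prime to `p`, and the step where `H` enters a chain from `K⟨g⟩` to `G` determines
`|G : C_G(H/K)|` by the criterion above.

Conversely, for a chief series `1 = N₀ < N₁ < ⋯ < G` the subgroups `W N_i` form the required chain
from `W` to `G`, again by the criterion.
-/

open Relation (ReflTransGen)

section Chains

variable {α : Type*} {r : α → α → Prop} {a b : α}

theorem reflTransGen_iff_exists_nat_chain :
    ReflTransGen r a b ↔
      ∃ (m : ℕ) (c : ℕ → α), c 0 = a ∧ c m = b ∧ ∀ i < m, r (c i) (c (i + 1)) := by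
  constructor
  · intro h
    induction h using ReflTransGen.head_induction_on with
    | refl => exact ⟨0, fun _ ↦ b, rfl, rfl, fun i hi ↦ absurd hi i.not_lt_zero⟩
    | @head a a' haa' _ ih =>
      obtain ⟨m, c, rfl, hm, hc⟩ := ih
      refine ⟨m + 1, fun i ↦ Nat.casesOn i a c, rfl, hm, fun i hi ↦ ?_⟩
      cases i with
      | zero => exact haa'
      | succ i => exact hc i (Nat.lt_of_succ_lt_succ hi)
  · rintro ⟨m, c, rfl, rfl, hc⟩
    induction m with
    | zero => exact .refl
    | succ m ih => exact (ih fun i hi ↦ hc i (hi.trans m.lt_succ_self)).tail (hc m m.lt_succ_self)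

theorem exists_rel_not_and_of_reflTransGen [Preorder α] (hr : ∀ ⦃x y⦄, r x y → x ≤ y)
    {P : α → Prop} (h : ReflTransGen r a b) (ha : ¬ P a) (hb : P b) :
    ∃ x y, a ≤ x ∧ r x y ∧ ¬ P x ∧ P y := by
  induction h using ReflTransGen.head_induction_on with
  | refl => exact absurd hb ha
  | @head a a' haa' _ ih =>
    by_cases ha' : P a'
    · exact ⟨a, a', le_rfl, haa', ha, ha'⟩
    · obtain ⟨x, y, hx, hxy⟩ := ih ha'
      exact ⟨x, y, (hr haa').trans hx, hxy⟩

theorem reflTransGen_of_forall_exists_gt [Preorder α] [WellFoundedGT α]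
    (h : ∀ a, a ≠ b → ∃ a', a < a' ∧ r a a') (a : α) : ReflTransGen r a b := by
  induction a using WellFoundedGT.induction with
  | ind a ih =>
    by_cases hab : a = b
    · exact hab ▸ .refl
    · obtain ⟨a', hlt, haa'⟩ := h a hab
      exact .head haa' (ih a' hlt)

end Chains

section Subgroups

variable {G G' : Type*} [Group G] [Group G'] {A H K N : Subgroup G}

theorem covBy_of_relIndex_prime (hKH : K ≤ H) (hp : (K.relIndex H).Prime) : K ⋖ H := by
  refine ⟨hKH.lt_of_not_ge fun hHK ↦ hp.ne_one (Subgroup.relIndex_eq_one.2 hHK),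
    fun L hKL hLH ↦ ?_⟩
  have hmul := Subgroup.relIndex_mul_relIndex K L H hKL.le hLH.le
  rcases Nat.prime_mul_iff.1 (hmul ▸ hp) with ⟨-, hone⟩ | ⟨-, hone⟩
  · exact hLH.not_ge (Subgroup.relIndex_eq_one.1 hone)
  · exact hKL.not_ge (Subgroup.relIndex_eq_one.1 hone)

theorem inf_eq_of_relIndex_prime (hp : (K.relIndex H).Prime) (hKH : K ≤ H) (hKA : K ≤ A)
    (hHA : ¬ H ≤ A) : A ⊓ H = K :=
  ((covBy_of_relIndex_prime hKH hp).eq_or_eq (le_inf hKA hKH) inf_le_right).resolve_right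
    fun h ↦ hHA (inf_eq_right.1 h)

theorem card_map_mk' [K.Normal] : Nat.card (H.map (QuotientGroup.mk' K)) = K.relIndex H := by
  rw [← Subgroup.relIndex_ker, QuotientGroup.ker_mk']

theorem relIndex_prime_of_covBy [Finite G] [K.Normal] (h : K ⋖ H) : (K.relIndex H).Prime := by
  let π := QuotientGroup.mk' K
  have hcard : Nat.card (H.map π) = K.relIndex H := card_map_mk'
  have hne : Nat.card (H.map π) ≠ 1 := by
    rw [hcard, Ne, Subgroup.relIndex_eq_one]
    exact h.1.not_ge
  obtain ⟨p, hp, hpdvd⟩ := Nat.exists_prime_and_dvd hne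
  have := Fact.mk hp
  obtain ⟨y, hy⟩ := exists_prime_orderOf_dvd_card' p hpdvd
  obtain ⟨x, hxH, hxy⟩ := y.2
  have hx : orderOf (π x) = p := by rw [hxy, Subgroup.orderOf_coe, hy]
  have hxK : x ∉ K := by
    intro hxK
    have hπx : π x = 1 := (QuotientGroup.eq_one_iff x).2 hxK
    exact hp.ne_one (by rw [← hx, hπx, orderOf_one])
  have hH : K ⊔ Subgroup.zpowers x = H := by
    have hle : K ⊔ Subgroup.zpowers x ≤ H := sup_le h.le (Subgroup.zpowers_le.2 hxH)
    exact (h.eq_or_eq le_sup_left hle).resolve_left fun hK ↦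
      hxK (hK.le (Subgroup.mem_sup_right (Subgroup.mem_zpowers x)))
  have hmap : H.map π = Subgroup.zpowers (π x) := by
    rw [← hH, Subgroup.map_sup, QuotientGroup.map_mk'_self, bot_sup_eq, MonoidHom.map_zpowers]
  rw [← hcard, hmap, Nat.card_zpowers]
  exact hx ▸ hp

theorem relIndex_map_map_dvd (f : G →* G') (A B : Subgroup G) :
    (A.map f).relIndex (B.map f) ∣ A.relIndex B := by
  have hle : (A.subgroupOf B).map (f.subgroupMap B) ≤ (A.map f).subgroupOf (B.map f) := by
    rintro _ ⟨x, hx, rfl⟩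
    exact ⟨x, hx, rfl⟩
  exact (Subgroup.index_dvd_of_le hle).trans
    (Subgroup.index_map_dvd _ (f.subgroupMap_surjective B))

theorem relIndex_sup_of_normal [Finite G] (W H : Subgroup G) [H.Normal] :
    W.relIndex (W ⊔ H) = W.relIndex H := by
  have hW := Subgroup.relIndex_mul_relIndex (W ⊓ H) W (W ⊔ H) inf_le_left le_sup_left
  have hH := Subgroup.relIndex_mul_relIndex (W ⊓ H) H (W ⊔ H) inf_le_right le_sup_right
  rw [Subgroup.relIndex_sup_right, mul_comm, ← Subgroup.inf_relIndex_left W H,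
    Subgroup.inf_relIndex_right] at hH
  exact Nat.eq_of_mul_eq_mul_left (Nat.pos_of_ne_zero Subgroup.index_ne_zero_of_finite)
    (hW.trans hH.symm)

theorem not_le_sup_zpowers_of_not_dvd_orderOf [K.Normal] (hKH : K ≤ H) {g : G}
    (hg : ¬ K.relIndex H ∣ orderOf g) : ¬ H ≤ K ⊔ Subgroup.zpowers g := by
  intro hle
  refine hg ?_
  calc K.relIndex H ∣ K.relIndex (K ⊔ Subgroup.zpowers g) :=
        Dvd.intro _ (Subgroup.relIndex_mul_relIndex K H _ hKH hle)
    _ ∣ orderOf g := by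
      rw [Subgroup.relIndex_sup_left, ← Nat.card_zpowers]
      exact Subgroup.relIndex_dvd_card _ _

theorem normal_of_le_of_isCyclic [N.Normal] [IsCyclic N] (hAN : A ≤ N) : A.Normal := by
  refine ⟨fun a ha g ↦ ?_⟩
  obtain ⟨m, hm⟩ := MonoidHom.map_cyclic (MulAut.conjNormal (H := N) g).toMonoidHom
  have hconj : g * a * g⁻¹ = a ^ m := congrArg Subtype.val (hm ⟨a, hAN ha⟩)
  exact hconj ▸ A.zpow_mem ha m

theorem exists_le_ker_sup_zpowers (f : G →* G') (H : Subgroup G) [IsCyclic (H.map f)] :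
    ∃ x ∈ H, H ≤ f.ker ⊔ Subgroup.zpowers x := by
  obtain ⟨⟨_, x, hxH, rfl⟩, hx⟩ := IsCyclic.exists_generator (α := H.map f)
  refine ⟨x, hxH, fun y hy ↦ ?_⟩
  obtain ⟨j, hj⟩ := hx ⟨f y, y, hy, rfl⟩
  have hfy : f x ^ j = f y := congrArg Subtype.val hj
  rw [Subgroup.mem_sup_of_normal_left]
  refine ⟨y * (x ^ j)⁻¹, ?_, x ^ j, Subgroup.zpow_mem_zpowers x j, inv_mul_cancel_right _ _⟩
  rw [MonoidHom.mem_ker, map_mul, map_inv, map_zpow, hfy, mul_inv_cancel]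

theorem sup_zpowers_pow_of_coprime [N.Normal] (g : G) {m : ℕ} (hm : m.Coprime N.index) :
    N ⊔ Subgroup.zpowers (g ^ m) = N ⊔ Subgroup.zpowers g := by
  refine le_antisymm (sup_le_sup_left (Subgroup.zpowers_le.2 (Subgroup.npow_mem_zpowers g m)) N)
    (sup_le le_sup_left (Subgroup.zpowers_le.2 ?_))
  have hord : m.Coprime (orderOf (g : G ⧸ N)) := hm.coprime_dvd_right (orderOf_dvd_natCard _)
  obtain ⟨j, hj⟩ := mem_zpowers_pow_iff.2 hord
  have hmem : ((g ^ m) ^ j)⁻¹ * g ∈ N := QuotientGroup.eq.1 hj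
  rw [sup_comm, Subgroup.mem_sup_of_normal_right]
  exact ⟨_, Subgroup.zpow_mem_zpowers _ j, _, hmem, mul_inv_cancel_left _ _⟩

theorem exists_sup_zpowers_eq_top_not_dvd_orderOf [Finite G] [N.Normal] {g : G}
    (hg : N ⊔ Subgroup.zpowers g = ⊤) {p : ℕ} (hp : p.Prime) (hpN : N.index.Coprime p) :
    ∃ x : G, N ⊔ Subgroup.zpowers x = ⊤ ∧ ¬ p ∣ orderOf x := by
  obtain ⟨a, b, hb, hab⟩ :=
    Nat.exists_eq_pow_mul_and_not_dvd (orderOf_pos g).ne' p hp.ne_one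
  refine ⟨g ^ p ^ a, ?_, ?_⟩
  · rw [sup_zpowers_pow_of_coprime g (hpN.symm.pow_left a), hg]
  · rwa [orderOf_pow, hab, Nat.gcd_mul_right_left, Nat.mul_div_cancel_left _ (pow_pos hp.pos a)]

theorem isCyclic_mulAut_of_prime_card {P : Type*} [Group P] (hp : (Nat.card P).Prime) :
    IsCyclic (MulAut P) := by
  have := Fact.mk hp
  have : IsCyclic P := isCyclic_of_prime_card rfl
  have : IsCyclic (ZMod (Nat.card P))ˣ := ZMod.isCyclic_units_prime hp
  exact isCyclic_of_injective (IsCyclic.mulAutMulEquiv P).toMonoidHom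
    (IsCyclic.mulAutMulEquiv P).injective

theorem card_mulAut_of_prime_card {P : Type*} [Group P] (hp : (Nat.card P).Prime) :
    Nat.card (MulAut P) = Nat.card P - 1 := by
  have := Fact.mk hp
  have : IsCyclic P := isCyclic_of_prime_card rfl
  have : Finite P := Nat.finite_of_card_ne_zero hp.ne_zero
  rw [IsCyclic.card_mulAut, Nat.totient_prime hp]

theorem normal_of_isNilpotent_quotient_normalCore (hp : H.index.Prime)
    (hnil : Group.IsNilpotent (G ⧸ H.normalCore)) : H.Normal := by
  let π := QuotientGroup.mk' H.normalCore
  have hπ : Function.Surjective π := QuotientGroup.mk'_surjective _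
  have hker : π.ker ≤ H := (QuotientGroup.ker_mk' _).trans_le H.normalCore_le
  have hindex : (H.map π).relIndex ⊤ = H.index := by
    rw [Subgroup.relIndex_top_right, Subgroup.index_map_eq H hπ hker]
  have hmax : IsCoatom (H.map π) :=
    covBy_top_iff.1 (covBy_of_relIndex_prime le_top (hindex ▸ hp))
  have := Subgroup.NormalizerCondition.normal_of_coatom _
    Group.normalizerCondition_of_isNilpotent hmax
  rw [← Subgroup.comap_map_eq_self hker]
  exact this.comap π

theorem inf_centralizer_ne_bot_s16 [Finite H] {p : ℕ} [Fact p.Prime] (hH : IsPGroup p H)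
    (hne : H ≠ ⊥) : H ⊓ Subgroup.centralizer (H : Set G) ≠ ⊥ := by
  have : Nontrivial H := (Subgroup.nontrivial_iff_ne_bot H).2 hne
  have := hH.center_nontrivial
  obtain ⟨z, hz, hz1⟩ := Subgroup.exists_ne_one_of_nontrivial (Subgroup.center H)
  have hzmem : (z : G) ∈ H ⊓ Subgroup.centralizer (H : Set G) :=
    ⟨z.2, Subgroup.mem_centralizer_iff.2 fun x hx ↦
      congrArg Subtype.val (Subgroup.mem_center_iff.1 hz ⟨x, hx⟩)⟩
  exact fun hbot ↦ hz1 (Subtype.ext ((Subgroup.eq_bot_iff_forall _).1 hbot z hzmem))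

theorem commutator_le_inf_of_le_normalizer [N.Normal]
    (h : N ≤ Subgroup.normalizer (A : Set G)) : ⁅A, N⁆ ≤ A ⊓ N :=
  le_inf (Subgroup.le_normalizer_iff_commutator_le_left.1 h) (Subgroup.commutator_le_right A N)

theorem le_normalizer_inf_of_normal [N.Normal] :
    A ≤ Subgroup.normalizer ((A ⊓ N : Subgroup G) : Set G) := by
  refine le_trans (le_inf Subgroup.le_normalizer ?_) Subgroup.inf_normalizer_le_normalizer_inf
  exact le_top.trans_eq (Subgroup.normalizer_eq_top N).symm

theorem normal_inf_of_sup_centralizer_eq_top [N.Normal]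
    (h : A ⊔ Subgroup.centralizer (N : Set G) = ⊤) : (A ⊓ N).Normal := by
  rw [← Subgroup.normalizer_eq_top_iff, eq_top_iff, ← h]
  exact sup_le le_normalizer_inf_of_normal
    ((Subgroup.centralizer_le (inf_le_right : A ⊓ N ≤ N)).trans
      (Subgroup.centralizer_le_normalizer _))

end Subgroups

section ChiefFactors

variable {G : Type*} [Group G] {H K L : Subgroup G}

theorem exists_isChiefFactor_le [Finite G] (hK : K.Normal) (hL : L.Normal) (hlt : K < L) :
    ∃ H ≤ L, IsChiefFactor H K := by
  obtain ⟨H, hHL, ⟨hH, hKH⟩, hmin⟩ :=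
    (Set.toFinite {M : Subgroup G | M.Normal ∧ K < M}).exists_le_minimal ⟨hL, hlt⟩
  refine ⟨H, hHL, hH, hK, hKH, fun M hM hKM hMH ↦ ?_⟩
  exact hKM.eq_or_lt.imp Eq.symm fun hlt ↦ hMH.antisymm (hmin ⟨hM, hlt⟩ hMH)

namespace IsChiefFactor

theorem relIndex_prime_of_forall_normal [Finite G] (h : IsChiefFactor H K)
    (hnormal : ∀ L, K ≤ L → L ≤ H → L.Normal) : (K.relIndex H).Prime := by
  obtain ⟨-, hK, hlt, hmin⟩ := h
  refine relIndex_prime_of_covBy ⟨hlt, fun L hKL hLH ↦ ?_⟩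
  rcases hmin L (hnormal L hKL.le hLH.le) hKL.le hLH.le with rfl | rfl
  exacts [hKL.false, hLH.false]

theorem relIndex_prime_of_eq_sup_zpowers [Finite G] (h : IsChiefFactor H K) {x : G}
    (hx : H = K ⊔ Subgroup.zpowers x) : (K.relIndex H).Prime := by
  have hK := h.2.1
  let π := QuotientGroup.mk' K
  have hπ : Function.Surjective π := QuotientGroup.mk'_surjective K
  have : (H.map π).Normal := h.1.map π hπ
  have hmap : H.map π = Subgroup.zpowers (π x) := by
    rw [hx, Subgroup.map_sup, QuotientGroup.map_mk'_self, bot_sup_eq, MonoidHom.map_zpowers]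
  have : IsCyclic (H.map π) := hmap ▸ inferInstance
  refine h.relIndex_prime_of_forall_normal fun L hKL hLH ↦ ?_
  have hLmap : (L.map π).Normal := normal_of_le_of_isCyclic (Subgroup.map_mono hLH)
  rw [← Subgroup.comap_map_eq_self ((QuotientGroup.ker_mk' K).trans_le hKL)]
  exact hLmap.comap π

end IsChiefFactor

theorem exists_le_sup_zpowers_of_isCyclic_quotient {N M D : Subgroup G}
    [(N.subgroupOf M).Normal] [IsCyclic (M ⧸ N.subgroupOf M)] (hDM : D ≤ M) :
    ∃ x ∈ D, D ≤ N ⊔ Subgroup.zpowers x := by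
  obtain ⟨x, hxD, hD⟩ :=
    exists_le_ker_sup_zpowers (QuotientGroup.mk' (N.subgroupOf M)) (D.subgroupOf M)
  refine ⟨x, hxD, ?_⟩
  calc D = (D.subgroupOf M).map M.subtype := (Subgroup.map_subgroupOf_eq_of_le hDM).symm
    _ ≤ (N.subgroupOf M ⊔ Subgroup.zpowers x).map M.subtype :=
      Subgroup.map_mono (by rwa [QuotientGroup.ker_mk'] at hD)
    _ ≤ N ⊔ Subgroup.zpowers (x : G) := by
      rw [Subgroup.map_sup, MonoidHom.map_zpowers, Subgroup.subgroupOf_map_subtype]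
      exact sup_le_sup_right inf_le_left _

namespace IsSupersolvable

theorem exists_eq_sup_zpowers (hG : IsSupersolvable G) (h : IsChiefFactor H K) :
    ∃ x, H = K ⊔ Subgroup.zpowers x := by
  obtain ⟨hH, hK, hlt, hmin⟩ := h
  obtain ⟨m, c, hbot, htop, hnormal, -, hcyclic⟩ := hG
  obtain ⟨i, him, hi, hi'⟩ : ∃ i < m, H ⊓ c i ≤ K ∧ ¬ H ⊓ c (i + 1) ≤ K := by
    by_contra! hstep
    have hall : ∀ i ≤ m, H ⊓ c i ≤ K := by
      intro i hi
      induction i with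
      | zero => simp [hbot]
      | succ i ih => exact hstep i hi (ih (Nat.le_of_succ_le hi))
    exact hlt.not_ge (by simpa [htop] using hall m le_rfl)
  have := hnormal i
  have := hnormal (i + 1)
  have := hcyclic i him
  obtain ⟨x, hx, hD⟩ :=
    exists_le_sup_zpowers_of_isCyclic_quotient (N := c i) (inf_le_right : H ⊓ c (i + 1) ≤ c (i + 1))
  have hH_eq : K ⊔ H ⊓ c (i + 1) = H :=
    (hmin _ inferInstance le_sup_left (sup_le hlt.le inf_le_left)).resolve_left
      fun h ↦ hi' (sup_eq_left.1 h)
  have hDK : H ⊓ c (i + 1) ≤ K ⊔ Subgroup.zpowers x := by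
    intro y hy
    obtain ⟨a, ha, b, hb, rfl⟩ := Subgroup.mem_sup_of_normal_left.1 (hD hy)
    have haH : a ∈ H := (H.mul_mem_cancel_right (Subgroup.zpowers_le.2 hx.1 hb)).1 hy.1
    exact Subgroup.mul_mem_sup (hi ⟨haH, ha⟩) hb
  refine ⟨x, le_antisymm ?_ (sup_le hlt.le (Subgroup.zpowers_le.2 hx.1))⟩
  exact hH_eq.ge.trans (sup_le le_sup_left hDK)

theorem relIndex_prime [Finite G] (hG : IsSupersolvable G) (h : IsChiefFactor H K) :
    (K.relIndex H).Prime := by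
  obtain ⟨x, hx⟩ := hG.exists_eq_sup_zpowers h
  exact h.relIndex_prime_of_eq_sup_zpowers hx

theorem of_forall_exists_isCyclic_quotient [Finite G]
    (h : ∀ (N : Subgroup G) [N.Normal], N ≠ ⊤ →
      ∃ M : Subgroup G, M.Normal ∧ N < M ∧ IsCyclic (M ⧸ N.subgroupOf M)) :
    IsSupersolvable G := by
  let cyclicStep (A B : {N : Subgroup G // N.Normal}) : Prop :=
    A ≤ B ∧ ∀ [((A : Subgroup G).subgroupOf B).Normal],
      IsCyclic ((B : Subgroup G) ⧸ (A : Subgroup G).subgroupOf B)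
  have hchain : ReflTransGen cyclicStep ⟨⊥, inferInstance⟩ ⟨⊤, inferInstance⟩ := by
    refine reflTransGen_of_forall_exists_gt (fun ⟨N, hN⟩ hne ↦ ?_) _
    obtain ⟨M, hM, hlt, hcyclic⟩ := h N fun htop ↦ hne (Subtype.ext htop)
    exact ⟨⟨M, hM⟩, hlt, hlt.le, hcyclic⟩
  obtain ⟨m, c, hbot, htop, hc⟩ := reflTransGen_iff_exists_nat_chain.1 hchain
  exact ⟨m, fun i ↦ c i, congrArg Subtype.val hbot, congrArg Subtype.val htop,
    fun i ↦ (c i).2, fun i hi ↦ (hc i hi).1, fun i hi ↦ (hc i hi).2⟩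

end IsSupersolvable

end ChiefFactors

section Centralizers

variable {G : Type*} [Group G] {A H K W : Subgroup G} [hH : H.Normal] [hK : K.Normal]

/-- The conjugation action of `G` on the normal section `H/K`, realised as the subgroup
`H.map (QuotientGroup.mk' K)` of `G ⧸ K`; for `K ≤ H` its kernel is `C_G(H/K)`. -/
def conjSection (H K : Subgroup G) [hH : H.Normal] [K.Normal] :
    G →* MulAut (H.map (QuotientGroup.mk' K)) :=
  have : (H.map (QuotientGroup.mk' K)).Normal := hH.map _ (QuotientGroup.mk'_surjective K)
  MulAut.conjNormal.comp (QuotientGroup.mk' K)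

theorem ker_conjSection : (conjSection H K).ker = chiefCentralizer H K hH hK := by
  ext g
  have hiff (h : G) : g * h * g⁻¹ * h⁻¹ ∈ K ↔ (g * h * g⁻¹ : G ⧸ K) = h := by
    rw [← QuotientGroup.eq_one_iff, ← mul_inv_eq_one (a := (g * h * g⁻¹ : G ⧸ K))]
    rfl
  constructor
  · intro hg h hh
    have hfix := DFunLike.congr_fun (MonoidHom.mem_ker.1 hg)
      ⟨h, Subgroup.mem_map_of_mem (QuotientGroup.mk' K) hh⟩
    exact (hiff h).2 (congrArg Subtype.val hfix)
  · intro hg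
    refine MonoidHom.mem_ker.2 (MulEquiv.ext ?_)
    rintro ⟨_, h, hh, rfl⟩
    exact Subtype.ext ((hiff h).1 (hg h hh))

instance chiefCentralizer_normal : (chiefCentralizer H K hH hK).Normal :=
  ker_conjSection (H := H) (K := K) ▸ inferInstance

theorem le_chiefCentralizer_iff : A ≤ chiefCentralizer H K hH hK ↔ ⁅A, H⁆ ≤ K :=
  Subgroup.commutator_le.symm

theorem le_chiefCentralizer_of_le_normalizer (hAH : A ⊓ H ≤ K)
    (hHA : H ≤ Subgroup.normalizer (A : Set G)) : A ≤ chiefCentralizer H K hH hK :=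
  le_chiefCentralizer_iff.2 ((commutator_le_inf_of_le_normalizer hHA).trans hAH)

theorem exists_chiefCentralizer_sup_zpowers_eq_top (hp : (K.relIndex H).Prime) :
    ∃ g : G, chiefCentralizer H K hH hK ⊔ Subgroup.zpowers g = ⊤ := by
  have : IsCyclic (MulAut (H.map (QuotientGroup.mk' K))) :=
    isCyclic_mulAut_of_prime_card (by rwa [card_map_mk'])
  obtain ⟨g, -, hg⟩ := exists_le_ker_sup_zpowers (conjSection H K) ⊤
  exact ⟨g, top_le_iff.1 (ker_conjSection (H := H) (K := K) ▸ hg)⟩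

theorem coprime_index_chiefCentralizer (hp : (K.relIndex H).Prime) :
    (chiefCentralizer H K hH hK).index.Coprime (K.relIndex H) := by
  rw [← card_map_mk'] at hp ⊢
  have hdvd : (chiefCentralizer H K hH hK).index ∣ Nat.card (H.map (QuotientGroup.mk' K)) - 1 := by
    rw [← ker_conjSection, Subgroup.index_ker, ← card_mulAut_of_prime_card hp]
    exact Subgroup.card_subgroup_dvd_card _
  exact ((Nat.coprime_self_sub_right hp.one_le).2 (Nat.coprime_one_right _)).symm.coprime_dvd_left
    hdvd

theorem normalCore_subgroupOf_sup (hWH : W ⊓ H = K) :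
    (W.subgroupOf (W ⊔ H)).normalCore =
      (W ⊓ chiefCentralizer H K hH hK).subgroupOf (W ⊔ H) := by
  set C := chiefCentralizer H K hH hK
  apply le_antisymm
  · let X := (W.subgroupOf (W ⊔ H)).normalCore.map (W ⊔ H).subtype
    have hXW : X ≤ W := Subgroup.map_le_iff_le_comap.2 (Subgroup.normalCore_le _)
    have hXsub : X.subgroupOf (W ⊔ H) = (W.subgroupOf (W ⊔ H)).normalCore :=
      Subgroup.comap_map_eq_self_of_injective (Subgroup.subtype_injective _) _
    have hX : W ⊔ H ≤ Subgroup.normalizer (X : Set G) := by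
      rw [← Subgroup.normal_subgroupOf_iff_le_normalizer (hXW.trans le_sup_left), hXsub]
      infer_instance
    have hXC : X ≤ C := le_chiefCentralizer_of_le_normalizer
      ((inf_le_inf_right H hXW).trans_eq hWH) (le_sup_right.trans hX)
    exact hXsub.ge.trans (Subgroup.comap_mono (le_inf hXW hXC))
  · have hCH : ⁅W ⊓ C, H⁆ ≤ W ⊓ C := by
      have hK_le : ⁅W ⊓ C, H⁆ ≤ K := le_chiefCentralizer_iff.1 inf_le_right
      exact le_inf (hK_le.trans (hWH ▸ inf_le_left))
        ((Subgroup.commutator_mono inf_le_right le_rfl).trans (Subgroup.commutator_le_left C H))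
    have : ((W ⊓ C).subgroupOf (W ⊔ H)).Normal :=
      (Subgroup.normal_subgroupOf_iff_le_normalizer (inf_le_left.trans le_sup_left)).2 <|
        sup_le le_normalizer_inf_of_normal (Subgroup.le_normalizer_iff_commutator_le_left.2 hCH)
    exact Subgroup.normal_le_normalCore.2 (Subgroup.comap_mono inf_le_left)

theorem card_quotient_normalCore_subgroupOf_sup [Finite G] (hWH : W ⊓ H = K) :
    Nat.card (↥(W ⊔ H) ⧸ (W.subgroupOf (W ⊔ H)).normalCore) =
      K.relIndex H * (chiefCentralizer H K hH hK).relIndex W := by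
  rw [normalCore_subgroupOf_sup hWH, ← Subgroup.index_eq_card]
  set C := chiefCentralizer H K hH hK
  calc (W ⊓ C).relIndex (W ⊔ H)
      = (W ⊓ C).relIndex W * W.relIndex (W ⊔ H) :=
        (Subgroup.relIndex_mul_relIndex _ _ _ inf_le_left le_sup_left).symm
    _ = K.relIndex H * C.relIndex W := by
      rw [Subgroup.inf_relIndex_left, relIndex_sup_of_normal, ← Subgroup.inf_relIndex_right W H,
        hWH, mul_comm]

end Centralizers

section ModularEmbedding

variable {G : Type*} [Group G] {n : ℕ} {A B D H K W : Subgroup G}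

namespace ModularlyEmbedded

theorem relIndex_prime_of_not_normal (h : ModularlyEmbedded n A B)
    (hAB : ¬ (A.subgroupOf B).Normal) : (A.relIndex B).Prime := by
  obtain ⟨p, -, hp, -, -, -, hindex⟩ := h.2.resolve_left hAB
  rw [Subgroup.relIndex, hindex]
  exact hp

theorem of_le_right (h : ModularlyEmbedded n A B) (hAD : A ≤ D) (hDB : D ≤ B) :
    ModularlyEmbedded n A D := by
  by_cases hAB : (A.subgroupOf B).Normal
  · refine ⟨hAD, .inl ?_⟩
    rw [Subgroup.normal_subgroupOf_iff_le_normalizer h.1] at hAB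
    exact (Subgroup.normal_subgroupOf_iff_le_normalizer hAD).2 (hDB.trans hAB)
  · have hcov := covBy_of_relIndex_prime h.1 (h.relIndex_prime_of_not_normal hAB)
    rcases hcov.eq_or_eq hAD hDB with rfl | rfl
    · exact ⟨le_rfl, .inl (by rw [Subgroup.subgroupOf_self]; infer_instance)⟩
    · exact h

end ModularlyEmbedded

theorem modularlyEmbedded_sup_iff [Finite G] [hH : H.Normal] [hK : K.Normal] (hWH : W ⊓ H = K)
    (hp : (K.relIndex H).Prime) :
    ModularlyEmbedded n W (W ⊔ H) ↔ W ≤ chiefCentralizer H K hH hK ∨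
      ∃ q : ℕ, q.Prime ∧ (chiefCentralizer H K hH hK).relIndex W = q ^ n := by
  have hcore := normalCore_subgroupOf_sup hWH
  have hcard := card_quotient_normalCore_subgroupOf_sup hWH
  have hindex : (W.subgroupOf (W ⊔ H)).index = K.relIndex H := by
    rw [← hWH, Subgroup.inf_relIndex_right]
    exact relIndex_sup_of_normal W H
  set C := chiefCentralizer H K hH hK
  constructor
  · rintro ⟨-, hnormal | ⟨p, q, -, hq, -, hpq, rfl⟩⟩
    · rw [Subgroup.normal_subgroupOf_iff_le_normalizer le_sup_left] at hnormal
      exact .inl (le_chiefCentralizer_of_le_normalizer hWH.le (le_sup_right.trans hnormal))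
    · rw [hcard, hindex] at hpq
      exact .inr ⟨q, hq, Nat.eq_of_mul_eq_mul_left hp.pos hpq⟩
  · rintro (hWC | ⟨q, hq, hqn⟩)
    · rw [inf_eq_left.2 hWC] at hcore
      exact ⟨le_sup_left, .inl (hcore ▸ inferInstance)⟩
    · refine ⟨le_sup_left, or_iff_not_imp_left.2 fun hnormal ↦ ?_⟩
      refine ⟨K.relIndex H, q, hp, hq, fun hnil ↦ hnormal ?_, by rw [hcard, hqn], hindex⟩
      exact normal_of_isNilpotent_quotient_normalCore (hindex ▸ hp) hnil

end ModularEmbedding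

section KPSubnormality

variable {G G' : Type*} [Group G] [Group G'] {A B N Q V W : Subgroup G}

/-- `A` is a normal subgroup, or a subgroup of prime index, of `B`: a single step of a chain
witnessing `K`-`ℙ`-subnormality. -/
def NormalOrPrimeStep (A B : Subgroup G) : Prop :=
  A ≤ B ∧ (B ≤ Subgroup.normalizer (A : Set G) ∨ (A.relIndex B).Prime)

/-- `A` is `K`-`ℙ`-subnormal in `B`: a chain leads from `A` to `B` in which every member is normal
or of prime index in the next. This consequence of `k`-submodularity does not mention `k`, passes
to quotients, and already forces supersolubility when all subgroups satisfy it. -/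
def KPSubnormal (A B : Subgroup G) : Prop :=
  ReflTransGen NormalOrPrimeStep A B

theorem NormalOrPrimeStep.map (h : NormalOrPrimeStep A B) (f : G →* G') :
    NormalOrPrimeStep (A.map f) (B.map f) := by
  obtain ⟨hle, hnormal | hp⟩ := h
  · exact ⟨Subgroup.map_mono hle,
      .inl ((Subgroup.map_mono hnormal).trans (Subgroup.le_normalizer_map f))⟩
  · refine ⟨Subgroup.map_mono hle, ?_⟩
    rcases (Nat.dvd_prime hp).1 (relIndex_map_map_dvd f A B) with hone | heq
    · exact .inl ((Subgroup.relIndex_eq_one.1 hone).trans Subgroup.le_normalizer)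
    · exact .inr (heq ▸ hp)

theorem KPSubnormal.map (h : KPSubnormal A B) (f : G →* G') :
    KPSubnormal (A.map f) (B.map f) :=
  ReflTransGen.lift (r := NormalOrPrimeStep) (Subgroup.map f) (fun _ _ hstep ↦ hstep.map f) _ _ h

theorem kpSubnormal_top_of_surjective {f : G →* G'} (hf : Function.Surjective f)
    (h : ∀ A : Subgroup G, KPSubnormal A ⊤) (A : Subgroup G') : KPSubnormal A ⊤ := by
  have hmap := (h (A.comap f)).map f
  rwa [Subgroup.map_comap_eq_self_of_surjective hf, Subgroup.map_top_of_surjective f hf] at hmap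

section Sylow

variable {p : ℕ}

theorem sylow_eq_of_le_normalizer {P Q : Sylow p G}
    (h : (Q : Subgroup G) ≤ Subgroup.normalizer (P : Set G)) : Q = P := by
  have hinf := Q.isPGroup'.inf_normalizer_sylow P
  rw [inf_eq_left.2 h] at hinf
  exact (Sylow.ext (Q.3 P.isPGroup' (inf_eq_left.1 hinf.symm))).symm

theorem normalizer_le_normalizer_sylow (P : Sylow p G) (hPW : (P : Subgroup G) ≤ W)
    (hW : W ≤ Subgroup.normalizer (P : Set G)) :
    Subgroup.normalizer (W : Set G) ≤ Subgroup.normalizer (P : Set G) := by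
  intro v hv
  have hconj : ((v • P : Sylow p G) : Subgroup G) ≤ W := by
    rw [Sylow.coe_subgroup_smul]
    rintro _ ⟨y, hy, rfl⟩
    exact (Subgroup.mem_normalizer_iff.1 hv y).1 (hPW hy)
  exact Sylow.smul_eq_iff_mem_normalizer.1 (sylow_eq_of_le_normalizer (hconj.trans hW))

theorem relIndex_normalizer_sylow_modEq_one [Finite G] [Fact p.Prime] (P : Sylow p G)
    (hPV : (P : Subgroup G) ≤ V) :
    (Subgroup.normalizer (P : Set G)).relIndex V ≡ 1 [MOD p] := by
  have hcard := card_sylow_modEq_one p V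
  rwa [(P.subtype hPV).card_eq_index_normalizer, ← Sylow.coe_coe,
    Sylow.coe_subtype, ← Subgroup.subgroupOf_normalizer_eq hPV] at hcard

theorem NormalOrPrimeStep.le_normalizer_sylow [Finite G] [Fact p.Prime]
    (hmax : ∀ r, r.Prime → r ∣ Nat.card G → r ≤ p) (P : Sylow p G) (h : NormalOrPrimeStep W V)
    (hPW : (P : Subgroup G) ≤ W) (hW : W ≤ Subgroup.normalizer (P : Set G)) :
    V ≤ Subgroup.normalizer (P : Set G) := by
  obtain ⟨hle, hnormal | hr⟩ := h
  · exact hnormal.trans (normalizer_le_normalizer_sylow P hPW hW)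
  have hmod := relIndex_normalizer_sylow_modEq_one P (hPW.trans hle)
  have hr_le : W.relIndex V ≤ p := hmax _ hr
    ((Subgroup.relIndex_dvd_card _ _).trans (Subgroup.card_subgroup_dvd_card V))
  rcases (Nat.dvd_prime hr).1 (Subgroup.relIndex_dvd_of_le_left V hW) with hone | heq
  · exact Subgroup.relIndex_eq_one.1 hone
  · rw [heq] at hmod
    have hdvd : p ∣ W.relIndex V - 1 := (Nat.modEq_iff_dvd' hr.one_le).1 hmod.symm
    have hp_le : p ≤ W.relIndex V - 1 := Nat.le_of_dvd (Nat.sub_pos_of_lt hr.one_lt) hdvd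
    have hr_pos := hr.pos
    omega

theorem KPSubnormal.sylow_normal [Finite G] [Fact p.Prime]
    (hmax : ∀ r, r.Prime → r ∣ Nat.card G → r ≤ p) {P : Sylow p G}
    (h : KPSubnormal (P : Subgroup G) ⊤) : (P : Subgroup G).Normal := by
  have hinvariant {V : Subgroup G} (h : KPSubnormal (P : Subgroup G) V) :
      (P : Subgroup G) ≤ V ∧ V ≤ Subgroup.normalizer (P : Set G) := by
    induction h with
    | refl => exact ⟨le_rfl, Subgroup.le_normalizer⟩
    | tail _ hstep ih => exact ⟨ih.1.trans hstep.1, hstep.le_normalizer_sylow hmax P ih.1 ih.2⟩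
  rw [← Subgroup.normalizer_eq_top_iff, eq_top_iff]
  exact (hinvariant h).2

end Sylow

theorem IsChiefFactor.card_prime_of_le_center [Finite G] (hN : IsChiefFactor N ⊥)
    (hcenter : N ≤ Subgroup.center G) : (Nat.card N).Prime := by
  rw [← Subgroup.relIndex_bot_left]
  refine hN.relIndex_prime_of_forall_normal fun L _ hLN ↦ ⟨fun x hx g ↦ ?_⟩
  rwa [Subgroup.mem_center_iff.1 (hcenter (hLN hx)) g, mul_inv_cancel_right]

theorem IsChiefFactor.card_prime_of_kpSubnormal [Finite G] (hN : IsChiefFactor N ⊥)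
    (hmax : ∀ r, r.Prime → r ∣ Nat.card G → r ≤ Nat.card N) (hQ : KPSubnormal Q ⊤)
    (hNQ : ¬ N ≤ Q) (hsup : Q ⊔ Subgroup.centralizer (N : Set G) = ⊤) :
    (Nat.card N).Prime := by
  have := hN.1
  obtain ⟨A, B, hQA, ⟨-, hstep⟩, hNA, hNB⟩ :=
    exists_rel_not_and_of_reflTransGen (P := (N ≤ ·)) (fun _ _ h ↦ h.1) hQ hNQ le_top
  have hA_sup : A ⊔ Subgroup.centralizer (N : Set G) = ⊤ :=
    top_le_iff.1 (hsup.ge.trans (sup_le_sup_right hQA _))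
  have hAN : A ⊓ N = ⊥ :=
    (hN.2.2.2 _ (normal_inf_of_sup_centralizer_eq_top hA_sup) bot_le inf_le_right).resolve_right
      fun h ↦ hNA (inf_eq_right.1 h)
  rcases hstep with hnormal | hp
  · have hA : A ≤ Subgroup.centralizer (N : Set G) := by
      rw [← Subgroup.commutator_eq_bot_iff_le_centralizer, ← le_bot_iff, ← hAN]
      exact commutator_le_inf_of_le_normalizer (hNB.trans hnormal)
    rw [sup_eq_right.2 hA, Subgroup.centralizer_eq_top_iff_subset] at hA_sup
    exact hN.card_prime_of_le_center hA_sup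
  · have hcard : A.relIndex N = Nat.card N := by
      rw [← Subgroup.inf_relIndex_right, hAN, Subgroup.relIndex_bot_left]
    have hle : Nat.card N ≤ A.relIndex B :=
      hcard ▸ Subgroup.relIndex_le_of_le_right hNB hp.ne_zero
    have hge : A.relIndex B ≤ Nat.card N := hmax _ hp
      ((Subgroup.relIndex_dvd_card _ _).trans (Subgroup.card_subgroup_dvd_card B))
    exact hle.antisymm hge ▸ hp

theorem exists_prime_dvd_max {n : ℕ} (hn : 1 < n) :
    ∃ p, p.Prime ∧ p ∣ n ∧ ∀ r, r.Prime → r ∣ n → r ≤ p := by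
  have hne : n.primeFactors.Nonempty := Nat.nonempty_primeFactors.2 hn
  have hmem {r : ℕ} : r ∈ n.primeFactors ↔ r.Prime ∧ r ∣ n :=
    Nat.mem_primeFactors_of_ne_zero (Nat.ne_zero_of_lt hn)
  obtain ⟨hp, hdvd⟩ := hmem.1 (Finset.max'_mem _ hne)
  exact ⟨_, hp, hdvd, fun r hr hr' ↦ Finset.le_max' _ r (hmem.2 ⟨hr, hr'⟩)⟩

theorem exists_normal_card_prime [Finite G] [Nontrivial G] (h : ∀ A : Subgroup G, KPSubnormal A ⊤) :
    ∃ N : Subgroup G, N.Normal ∧ (Nat.card N).Prime := by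
  obtain ⟨p, hp, hpdvd, hmax⟩ := exists_prime_dvd_max (Finite.one_lt_card (α := G))
  have := Fact.mk hp
  let P : Sylow p G := default
  have hP : (P : Subgroup G).Normal := (h P).sylow_normal hmax
  obtain ⟨Q, hPQ⟩ := Subgroup.exists_right_complement'_of_coprime P.card_coprime_index
  have hZ := inf_centralizer_ne_bot_s16 P.isPGroup' (P.ne_bot_of_dvd_card hpdvd)
  obtain ⟨N, hNZ, hN⟩ := exists_isChiefFactor_le inferInstance inferInstance hZ.bot_lt
  have hN_ne : N ≠ ⊥ := hN.2.2.1.ne'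
  have hNP : N ≤ P := hNZ.trans inf_le_left
  refine ⟨N, hN.1, hN.card_prime_of_kpSubnormal (fun r hr hr' ↦ (hmax r hr hr').trans ?_) (h Q)
    (fun hNQ ↦ hN_ne (le_bot_iff.1 (hPQ.disjoint hNP hNQ))) ?_⟩
  · have := (Subgroup.nontrivial_iff_ne_bot N).2 hN_ne
    obtain ⟨n, hn, hcard⟩ := (P.isPGroup'.to_le hNP).nontrivial_iff_card.1 this
    exact hcard ▸ Nat.le_self_pow hn.ne' p
  · rw [eq_top_iff, ← hPQ.sup_eq_top, sup_comm]
    exact sup_le_sup_left (Subgroup.le_centralizer_iff.1 (hNZ.trans inf_le_right)) Q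

theorem isSupersolvable_of_forall_kpSubnormal [Finite G] (h : ∀ A : Subgroup G, KPSubnormal A ⊤) :
    IsSupersolvable G := by
  refine .of_forall_exists_isCyclic_quotient fun N _ hN ↦ ?_
  have := QuotientGroup.nontrivial_iff.2 hN
  let π := QuotientGroup.mk' N
  have hπ : Function.Surjective π := QuotientGroup.mk'_surjective N
  obtain ⟨M, hM, hp⟩ := exists_normal_card_prime (kpSubnormal_top_of_surjective hπ h)
  have hprime : (N.relIndex (M.comap π)).Prime := by
    rwa [← card_map_mk', Subgroup.map_comap_eq_self_of_surjective hπ]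
  have := Fact.mk hprime
  have hle : N ≤ M.comap π := (QuotientGroup.ker_mk' N).ge.trans (π.ker_le_comap M)
  exact ⟨M.comap π, hM.comap π, (covBy_of_relIndex_prime hle hprime).lt,
    isCyclic_of_prime_card (p := N.relIndex (M.comap π)) rfl⟩

end KPSubnormality

section Submodularity

variable {G : Type*} [Group G] {k : ℕ} {A B H K W : Subgroup G}

/-- `A` is `n`-modularly embedded in `B` for some `1 ≤ n ≤ k`: a single step of a chain witnessing
`k`-submodularity. -/
def ModularStep (k : ℕ) (A B : Subgroup G) : Prop :=
  ∃ n : ℕ, 0 < n ∧ n ≤ k ∧ ModularlyEmbedded n A B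

theorem kSubmodularIn_iff_reflTransGen_s16 :
    KSubmodularIn k A B ↔ ReflTransGen (ModularStep k) A B :=
  (reflTransGen_iff_exists_nat_chain (r := ModularStep k)).symm

theorem ModularStep.normalOrPrimeStep (h : ModularStep k A B) : NormalOrPrimeStep A B := by
  obtain ⟨n, -, -, hAB⟩ := h
  refine ⟨hAB.1, or_iff_not_imp_left.2 fun hnormal ↦ hAB.relIndex_prime_of_not_normal ?_⟩
  rwa [Subgroup.normal_subgroupOf_iff_le_normalizer hAB.1]

theorem KSubmodularIn.kpSubnormal (h : KSubmodularIn k A B) : KPSubnormal A B :=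
  ReflTransGen.mono (r := ModularStep k) (fun _ _ ↦ ModularStep.normalOrPrimeStep) _ _
    (kSubmodularIn_iff_reflTransGen_s16.1 h)

section ChiefFactor

variable [Finite G] [hH : H.Normal] [hK : K.Normal]

theorem chiefCentralizer_eq_top_or_index_eq_prime_pow
    (h : ∀ A : Subgroup G, KSubmodularIn k A ⊤) (hKH : K ≤ H) (hp : (K.relIndex H).Prime) :
    chiefCentralizer H K hH hK = ⊤ ∨
      ∃ q n : ℕ, q.Prime ∧ 0 < n ∧ n ≤ k ∧ (chiefCentralizer H K hH hK).index = q ^ n := by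
  obtain ⟨g₀, hg₀⟩ := exists_chiefCentralizer_sup_zpowers_eq_top hp
  obtain ⟨g, hg, hpg⟩ :=
    exists_sup_zpowers_eq_top_not_dvd_orderOf hg₀ hp (coprime_index_chiefCentralizer hp)
  obtain ⟨A, B, hA, ⟨n, hn, hnk, hAB⟩, hHA, hHB⟩ :=
    exists_rel_not_and_of_reflTransGen (P := (H ≤ ·)) (fun _ _ hstep ↦ hstep.normalOrPrimeStep.1)
      (kSubmodularIn_iff_reflTransGen_s16.1 (h _))
      (not_le_sup_zpowers_of_not_dvd_orderOf hKH hpg) le_top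
  have hAH : A ⊓ H = K := inf_eq_of_relIndex_prime hp hKH (le_sup_left.trans hA) hHA
  have hA_sup : chiefCentralizer H K hH hK ⊔ A = ⊤ :=
    top_le_iff.1 (hg.ge.trans (sup_le_sup_left (le_sup_right.trans hA) _))
  have hA_embedded : ModularlyEmbedded n A (A ⊔ H) :=
    hAB.of_le_right le_sup_left (sup_le hAB.1 hHB)
  rcases (modularlyEmbedded_sup_iff hAH hp).1 hA_embedded with hAC | ⟨q, hq, hqn⟩
  · exact .inl (sup_eq_left.2 hAC ▸ hA_sup)
  · refine .inr ⟨q, n, hq, hn, hnk, ?_⟩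
    rw [← hqn, ← Subgroup.relIndex_sup_left, hA_sup, Subgroup.relIndex_top_right]

theorem modularStep_sup (hk : 0 < k) (hKH : K ≤ H) (hp : (K.relIndex H).Prime)
    (hC : chiefCentralizer H K hH hK = ⊤ ∨
      ∃ q n : ℕ, q.Prime ∧ n ≤ k ∧ (chiefCentralizer H K hH hK).index = q ^ n)
    (hKW : K ≤ W) : ModularStep k W (W ⊔ H) := by
  by_cases hHW : H ≤ W
  · rw [sup_eq_left.2 hHW]
    exact ⟨1, one_pos, hk, le_rfl, .inl (by rw [Subgroup.subgroupOf_self]; infer_instance)⟩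
  have hembedded (n : ℕ) := modularlyEmbedded_sup_iff (n := n)
    (inf_eq_of_relIndex_prime hp hKH hKW hHW) hp
  by_cases hWC : W ≤ chiefCentralizer H K hH hK
  · exact ⟨1, one_pos, hk, (hembedded 1).2 (.inl hWC)⟩
  obtain ⟨q, n, hq, hnk, hqn⟩ := hC.resolve_left fun htop ↦ hWC (htop ▸ le_top)
  obtain ⟨m, hmn, hqm⟩ :=
    (Nat.dvd_prime_pow hq).1 (hqn ▸ Subgroup.relIndex_dvd_index_of_normal _ W)
  have hm : m ≠ 0 := by
    rintro rfl
    exact hWC (Subgroup.relIndex_eq_one.1 hqm)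
  exact ⟨m, Nat.pos_of_ne_zero hm, hmn.trans hnk, (hembedded m).2 (.inr ⟨q, hq, hqm⟩)⟩

end ChiefFactor

theorem IsSupersolvable.kSubmodularIn_top [Finite G] (hG : IsSupersolvable G) (hk : 0 < k)
    (hC : ∀ H K : Subgroup G, ∀ h : IsChiefFactor H K, chiefCentralizer H K h.1 h.2.1 = ⊤ ∨
      ∃ q n : ℕ, q.Prime ∧ n ≤ k ∧ (chiefCentralizer H K h.1 h.2.1).index = q ^ n)
    (W : Subgroup G) : KSubmodularIn k W ⊤ := by
  let supW (N : {N : Subgroup G // N.Normal}) : Subgroup G := W ⊔ N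
  have hchain : ReflTransGen (Function.onFun (ModularStep k) supW)
      ⟨⊥, inferInstance⟩ ⟨⊤, inferInstance⟩ := by
    refine reflTransGen_of_forall_exists_gt (fun ⟨N, hN⟩ hne ↦ ?_) _
    obtain ⟨M, -, hM⟩ := exists_isChiefFactor_le hN (inferInstance : (⊤ : Subgroup G).Normal)
      (Ne.lt_top fun htop ↦ hne (Subtype.ext htop))
    have := hM.1
    have hNM := hM.2.2.1
    have hstep := modularStep_sup hk hNM.le (hG.relIndex_prime hM) (hC M N hM)
      (le_sup_right : N ≤ W ⊔ N)
    rw [sup_assoc, sup_eq_right.2 hNM.le] at hstep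
    exact ⟨⟨M, hM.1⟩, hNM, hstep⟩
  have hlift := ReflTransGen.lift supW le_rfl _ _ hchain
  simp only [Function.onFun, supW, sup_bot_eq, sup_top_eq] at hlift
  exact kSubmodularIn_iff_reflTransGen_s16.2 hlift

end Submodularity

/-- Theorem 2 (parts (1) ↔ (3)): every subgroup of `G` is `k`-submodular in
`G` iff `G` is supersoluble and, for every chief factor `H/K` of `G`,
`G/C_G(H/K)` is trivial or cyclic of order `q ^ n` for a prime `q` and a
natural number `n ≤ k`. -/
theorem all_kSubmodular_iff_supersolvable {G : Type*} [Group G] [Finite G]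
    {k : ℕ} (hk : 0 < k) :
    (∀ H : Subgroup G, KSubmodularIn k H ⊤) ↔
      (IsSupersolvable G ∧
        ∀ H K : Subgroup G, ∀ hcf : IsChiefFactor H K,
          (chiefCentralizer H K hcf.1 hcf.2.1 = ⊤ ∨
            ∃ (q n : ℕ), q.Prime ∧ 0 < n ∧ n ≤ k ∧
              (chiefCentralizer H K hcf.1 hcf.2.1).index = q ^ n ∧
              ∃ g : G, chiefCentralizer H K hcf.1 hcf.2.1 ⊔
                Subgroup.zpowers g = ⊤)) := by
  constructor
  · intro h
    have hG : IsSupersolvable G :=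
      isSupersolvable_of_forall_kpSubnormal fun A ↦ (h A).kpSubnormal
    refine ⟨hG, fun H K hcf ↦ ?_⟩
    have := hcf.1
    have := hcf.2.1
    have hp := hG.relIndex_prime hcf
    refine (chiefCentralizer_eq_top_or_index_eq_prime_pow h hcf.2.2.1.le hp).imp id ?_
    rintro ⟨q, n, hq, hn, hnk, hindex⟩
    exact ⟨q, n, hq, hn, hnk, hindex, exists_chiefCentralizer_sup_zpowers_eq_top hp⟩
  · rintro ⟨hG, hC⟩ W
    refine hG.kSubmodularIn_top hk (fun H K hcf ↦ (hC H K hcf).imp id ?_) W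
    rintro ⟨q, n, hq, -, hnk, hindex, -⟩
    exact ⟨q, n, hq, hnk, hindex⟩
end
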